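/- arXiv:1612.00256 — 10 statements merged into one kernel-verified Lean document; each statement's English description precedes it below -/
import Mathlib

section
/- For every natural number s ≥ 1 and every c ∈ ℝ, and for each k = 1,…,s, there exists a smooth function F_{k,c} : ℝ^{k−1} → ℝ such that the jet-coordinate function y_k := T_c^{k−1} π₀ on ℝ^s satisfies y_k(u₀,…,u_{s−1}) = u_{k−1} + F_{k,c}(u₀,…,u_{k−2}) for all (u₀,…,u_{s−1}) ∈ ℝ^s. In particular, y_k does not depend on the variables u_j with j ≥ k, ∂y_k/∂u_{k−1} ≡ 1, and the Jacobian matrix of the map (u₀,…,u_{s−1}) ↦ (y₁,…,y_s) is everywhere the sum of the identity matrix and a strictly lower triangular matrix, hence has determinant 1 at every point. -/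
/-!
The operator `T_c` is the derivation `F ↦ dF(u)(shift u)` along the shift `u_j ↦ u_{j+1}`
(`Tc_apply`), plus multiplication by `c * u₀`. If `y = u_m + F(u₀, …, u_{m-1})`, the derivation
sends the leading term `u_m` to `u_{m+1}`, while both `dF` applied to the shift and `c * u₀ * y`
involve only `u₀, …, u_m`. Hence the triangular shape propagates by induction on the number of
applications of `T_c` (`chain_triangular`). The partial derivatives are then read off from the
chain rule (`fderiv_triangular`), and the determinant from lower triangularity of the Jacobian.
-/

open scoped BigOperators

/-- The jet-space expression of the operator `L_c = d/dx + c·u` of the Riccati hierarchy,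
acting on functions on `ℝ^s` with jet coordinates `(u₀, …, u_{s-1})`:
`(T_c F)(u) = Σ_{j=0}^{s-2} u_{j+1} · ∂F/∂u_j + c · u₀ · F`. -/
noncomputable def Tc (s : ℕ) (c : ℝ) (F : (Fin s → ℝ) → ℝ) : (Fin s → ℝ) → ℝ :=
  fun u =>
    (∑ j : Fin s, if h : (j : ℕ) + 1 < s then
        u ⟨(j : ℕ) + 1, h⟩ * fderiv ℝ F u (Pi.single j 1) else 0)
    + (if h : 0 < s then c * u ⟨0, h⟩ * F u else 0)

/-- The coordinate function `π₀(u₀, …, u_{s-1}) = u₀`. -/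
noncomputable def proj0 (s : ℕ) : (Fin s → ℝ) → ℝ :=
  fun u => if h : 0 < s then u ⟨0, h⟩ else 0

/-- The total-derivative direction on jet space: `(u₀, …, u_{s-1}) ↦ (u₁, …, u_{s-1}, 0)`. The
last entry is `0` because the sum defining `Tc` stops at `j = s - 2`. -/
noncomputable def jetShift (s : ℕ) (u : Fin s → ℝ) : Fin s → ℝ :=
  fun j => if h : (j : ℕ) + 1 < s then u ⟨(j : ℕ) + 1, h⟩ else 0

theorem Tc_apply {s : ℕ} (hs : 0 < s) (c : ℝ) (F : (Fin s → ℝ) → ℝ) (u : Fin s → ℝ) :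
    Tc s c F u = fderiv ℝ F u (jetShift s u) + c * u ⟨0, hs⟩ * F u := by
  have h : fderiv ℝ F u (jetShift s u)
      = ∑ j, jetShift s u j * fderiv ℝ F u (Pi.single j 1) := by
    conv_lhs => rw [pi_eq_sum_univ' (jetShift s u)]
    rw [map_sum]
    refine Finset.sum_congr rfl fun j _ => ?_
    rw [map_smul, smul_eq_mul]
  rw [h, Tc, dif_pos hs]
  congr 1
  refine Finset.sum_congr rfl fun j _ => ?_
  unfold jetShift
  split_ifs <;> simp

theorem fderiv_triangular {s m : ℕ} (hm : m < s) {F : (Fin m → ℝ) → ℝ}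
    (hF : Differentiable ℝ F) {y : (Fin s → ℝ) → ℝ}
    (hy : ∀ u, y u = u ⟨m, hm⟩ + F (fun i => u (Fin.castLE hm.le i))) (u w : Fin s → ℝ) :
    fderiv ℝ y u w = w ⟨m, hm⟩
      + fderiv ℝ F (fun i => u (Fin.castLE hm.le i)) (fun i => w (Fin.castLE hm.le i)) := by
  let R : (Fin s → ℝ) →L[ℝ] (Fin m → ℝ) :=
    ContinuousLinearMap.pi fun i => ContinuousLinearMap.proj (Fin.castLE hm.le i)
  have h1 : HasFDerivAt (fun u : Fin s → ℝ => u ⟨m, hm⟩)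
      (ContinuousLinearMap.proj (R := ℝ) (φ := fun _ : Fin s => ℝ) ⟨m, hm⟩) u :=
    hasFDerivAt_apply _ _
  have h2 : HasFDerivAt (fun u => F (R u)) ((fderiv ℝ F (R u)).comp R) u :=
    HasFDerivAt.comp u (hF (R u)).hasFDerivAt R.hasFDerivAt
  have h3 : HasFDerivAt y
      (ContinuousLinearMap.proj (R := ℝ) (φ := fun _ : Fin s => ℝ) ⟨m, hm⟩
        + (fderiv ℝ F (R u)).comp R) u := by
    rw [show y = fun u => u ⟨m, hm⟩ + F (R u) from funext hy]
    exact h1.add h2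
  rw [h3.fderiv]
  rfl

theorem fderiv_triangular_single_of_lt {s m : ℕ} (hm : m < s) {F : (Fin m → ℝ) → ℝ}
    (hF : Differentiable ℝ F) {y : (Fin s → ℝ) → ℝ}
    (hy : ∀ u, y u = u ⟨m, hm⟩ + F (fun i => u (Fin.castLE hm.le i))) (u : Fin s → ℝ)
    (j : Fin s) (hj : m < (j : ℕ)) : fderiv ℝ y u (Pi.single j 1) = 0 := by
  rw [fderiv_triangular hm hF hy]
  have h0 : (fun i : Fin m => (Pi.single j 1 : Fin s → ℝ) (Fin.castLE hm.le i)) = 0 := by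
    ext i
    refine Pi.single_eq_of_ne (fun h => ?_) _
    have := congrArg Fin.val h
    simp only [Fin.val_castLE] at this
    omega
  rw [h0, map_zero, add_zero]
  refine Pi.single_eq_of_ne (fun h => ?_) _
  have := congrArg Fin.val h
  simp only at this
  omega

theorem fderiv_triangular_single_self {s m : ℕ} (hm : m < s) {F : (Fin m → ℝ) → ℝ}
    (hF : Differentiable ℝ F) {y : (Fin s → ℝ) → ℝ}
    (hy : ∀ u, y u = u ⟨m, hm⟩ + F (fun i => u (Fin.castLE hm.le i))) (u : Fin s → ℝ) :
    fderiv ℝ y u (Pi.single ⟨m, hm⟩ 1) = 1 := by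
  rw [fderiv_triangular hm hF hy]
  have h0 : (fun i : Fin m => (Pi.single ⟨m, hm⟩ 1 : Fin s → ℝ) (Fin.castLE hm.le i)) = 0 := by
    ext i
    refine Pi.single_eq_of_ne (fun h => ?_) _
    have := congrArg Fin.val h
    simp only [Fin.val_castLE] at this
    omega
  rw [h0, map_zero, add_zero, Pi.single_eq_same]

/-- The triangular form of the chain, indexed by the number `m = k - 1` of applications of
`T_c`. -/
theorem chain_triangular (s : ℕ) (c : ℝ) (m : ℕ) (hm : m < s) :
    ∃ F : (Fin m → ℝ) → ℝ, ContDiff ℝ (⊤ : ℕ∞) F ∧ ∀ u : Fin s → ℝ,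
      (Tc s c)^[m] (proj0 s) u = u ⟨m, hm⟩ + F (fun i => u (Fin.castLE hm.le i)) := by
  induction m with
  | zero => exact ⟨fun _ => 0, contDiff_const, fun u => by simp [proj0, hm]⟩
  | succ m ih =>
    obtain ⟨F, hF, hy⟩ := ih (by omega)
    have hFd : Differentiable ℝ F := hF.differentiable (by simp)
    -- `∑ j, v_{j+1} ∂_j F + c v₀ (v_m + F)`, the part of `T_c (u_m + F)` other than `u_{m+1}`.
    refine ⟨fun v => fderiv ℝ F (fun i => v i.castSucc) (fun i => v i.succ)
      + c * v 0 * (v (Fin.last m) + F (fun i => v i.castSucc)), ?_, fun u => ?_⟩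
    · have hcast : ContDiff ℝ (⊤ : ℕ∞) (fun (v : Fin (m + 1) → ℝ) (i : Fin m) => v i.castSucc) :=
        contDiff_pi.2 fun i => contDiff_apply ℝ ℝ _
      have hsucc : ContDiff ℝ (⊤ : ℕ∞) (fun (v : Fin (m + 1) → ℝ) (i : Fin m) => v i.succ) :=
        contDiff_pi.2 fun i => contDiff_apply ℝ ℝ _
      have hdF : ContDiff ℝ (⊤ : ℕ∞) (fderiv ℝ F) := hF.fderiv_right (by simp)
      exact ((hdF.comp hcast).clm_apply hsucc).add
        ((contDiff_const.mul (contDiff_apply ℝ ℝ _)).mul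
          ((contDiff_apply ℝ ℝ _).add (hF.comp hcast)))
    · rw [Function.iterate_succ_apply', Tc_apply (by omega),
        fderiv_triangular (by omega) hFd hy, hy]
      have hshift : ∀ i (hi : i + 1 < s), jetShift s u ⟨i, by omega⟩ = u ⟨i + 1, hi⟩ :=
        fun i hi => dif_pos hi
      have hS : (fun i : Fin m => jetShift s u (Fin.castLE (by omega) i))
          = fun i : Fin m => u (Fin.castLE hm.le i.succ) :=
        funext fun i => hshift i (by omega)
      rw [hshift m hm, hS, add_assoc]
      rfl

/-- For each `k = 1, …, s`, the jet coordinate `y_k := T_c^{k-1} π₀` equals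
`u_{k-1} + F_{k,c}(u₀, …, u_{k-2})` for a smooth function `F_{k,c} : ℝ^{k-1} → ℝ`.
In particular `y_k` has vanishing partial derivatives in the variables `u_j` with `j ≥ k`,
`∂y_k/∂u_{k-1} ≡ 1`, and the Jacobian matrix of `u ↦ (y₁, …, y_s)` is everywhere the sum of
the identity and a strictly lower triangular matrix, hence has determinant `1` everywhere. -/
theorem riccati_chain_jet_coordinates (s : ℕ) (hs : 1 ≤ s) (c : ℝ) :
    (∀ k : ℕ, ∀ _hk1 : 1 ≤ k, ∀ _hk2 : k ≤ s,
      ∃ F : (Fin (k - 1) → ℝ) → ℝ, ContDiff ℝ (⊤ : ℕ∞) F ∧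
        (∀ u : Fin s → ℝ,
          (Tc s c)^[k - 1] (proj0 s) u
            = u ⟨k - 1, by omega⟩ + F (fun i => u (Fin.castLE (by omega : k - 1 ≤ s) i))) ∧
        (∀ u : Fin s → ℝ, ∀ j : Fin s, k ≤ (j : ℕ) →
          fderiv ℝ ((Tc s c)^[k - 1] (proj0 s)) u (Pi.single j 1) = 0) ∧
        (∀ u : Fin s → ℝ,
          fderiv ℝ ((Tc s c)^[k - 1] (proj0 s)) u (Pi.single ⟨k - 1, by omega⟩ 1) = 1))
    ∧ (∀ u : Fin s → ℝ,
        ∃ T : Matrix (Fin s) (Fin s) ℝ,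
          (∀ i j : Fin s, (i : ℕ) ≤ (j : ℕ) → T i j = 0) ∧
          (Matrix.of fun i j : Fin s =>
              fderiv ℝ ((Tc s c)^[(i : ℕ)] (proj0 s)) u (Pi.single j 1)) = 1 + T ∧
          (Matrix.of fun i j : Fin s =>
              fderiv ℝ ((Tc s c)^[(i : ℕ)] (proj0 s)) u (Pi.single j 1)).det = 1) := by
  refine ⟨fun k hk1 hk2 => ?_, fun u => ?_⟩
  · obtain ⟨F, hF, hy⟩ := chain_triangular s c (k - 1) (by omega)
    have hFd : Differentiable ℝ F := hF.differentiable (by simp)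
    exact ⟨F, hF, hy,
      fun u j hj => fderiv_triangular_single_of_lt (by omega) hFd hy u j (by omega),
      fun u => fderiv_triangular_single_self (by omega) hFd hy u⟩
  · set J : Matrix (Fin s) (Fin s) ℝ := Matrix.of fun i j : Fin s =>
      fderiv ℝ ((Tc s c)^[(i : ℕ)] (proj0 s)) u (Pi.single j 1) with hJ
    have hdiag : ∀ i, J i i = 1 := fun i => by
      obtain ⟨F, hF, hy⟩ := chain_triangular s c i i.2
      exact fderiv_triangular_single_self i.2 (hF.differentiable (by simp)) hy u
    have hupper : ∀ i j : Fin s, i < j → J i j = 0 := fun i j hij => by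
      obtain ⟨F, hF, hy⟩ := chain_triangular s c i i.2
      exact fderiv_triangular_single_of_lt i.2 (hF.differentiable (by simp)) hy u j hij
    refine ⟨J - 1, fun i j hij => ?_, by simp, ?_⟩
    · rcases (show i ≤ j from hij).eq_or_lt with rfl | h
      · simp [hdiag]
      · simp [hupper i j h, h.ne]
    · rw [Matrix.det_of_isLowerTriangular J fun i j hij => hupper i j hij]
      simp [hdiag]
end

section
/- For every natural number s ≥ 1 and every c ∈ ℝ, the map φ_{s,c} : ℝ^s → ℝ^s defined by φ_{s,c}(u₀,…,u_{s−1}) := (y₁(u₀,…,u_{s−1}),…,y_s(u₀,…,u_{s−1})) is a global diffeomorphism of ℝ^s: it is a smooth bijection whose inverse is also smooth. -/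
/-!
The chain is triangular: `y_{k+1} = u_k + g_k(u₀, …, u_{k-1})` with `g_k` smooth (`IsTriangular`).
This is preserved by `T_c` (`IsTriangular.tc`): the derivation `Σ u_{j+1} ∂_j` sends the leading
term `u_k` to `u_{k+1}` and sends `g_k` to an expression in `u₀, …, u_k`, and `c u₀ F` also
involves only `u₀, …, u_k`.

A triangular map is inverted by solving for the coordinates one at a time. Here this is
phrased as a fixed-point iteration: `φ(u) = y` iff `u` is fixed by `x ↦ y - g(x)`, and as the `k`-th
coordinate of `g` sees only the coordinates below `k`, the `s`-th iterate of this map is constant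
(`agreesBelow_iterate`). Its value is the unique fixed point, and it depends smoothly on `y`.
-/

open scoped BigOperators

/-- The vectors `u` and `v` have the same coordinates of index `< k`. -/
def AgreesBelow {s : ℕ} (k : ℕ) (u v : Fin s → ℝ) : Prop :=
  ∀ j : Fin s, (j : ℕ) < k → u j = v j

/-- The function `g` depends only on the coordinates of index `< k`. -/
def DependsBelow {s : ℕ} (k : ℕ) (g : (Fin s → ℝ) → ℝ) : Prop :=
  ∀ u v, AgreesBelow k u v → g u = g v

/-- `F = u_k + g`, where `g` is smooth and depends only on `u₀, …, u_{k-1}`. -/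
def IsTriangular {s : ℕ} (k : Fin s) (F : (Fin s → ℝ) → ℝ) : Prop :=
  ∃ g : (Fin s → ℝ) → ℝ, ContDiff ℝ (⊤ : ℕ∞) g ∧ DependsBelow k g ∧ ∀ u, F u = u k + g u

lemma DependsBelow.fderiv_eq {s k : ℕ} {g : (Fin s → ℝ) → ℝ} (hg : DependsBelow k g)
    {u v : Fin s → ℝ} (h : AgreesBelow k u v) : fderiv ℝ g u = fderiv ℝ g v := by
  -- `g` is invariant under translation by `v - u`.
  have e : (fun w => g (w + (v - u))) = g := by
    funext w
    refine hg _ _ fun j hj => ?_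
    simp [h j hj]
  have := fderiv_comp_add_right (𝕜 := ℝ) (f := g) (x := u) (v - u)
  rw [e] at this
  simpa using this

lemma DependsBelow.fderiv_single {s k : ℕ} {g : (Fin s → ℝ) → ℝ} (hg : DependsBelow k g)
    (hs : ContDiff ℝ (⊤ : ℕ∞) g) (u : Fin s → ℝ) {j : Fin s} (hj : k ≤ (j : ℕ)) :
    fderiv ℝ g u (Pi.single j 1) = 0 := by
  have hd : DifferentiableAt ℝ g u := hs.differentiable (by simp) u
  rw [← hd.lineDeriv_eq_fderiv, lineDeriv]
  have e : (fun t : ℝ => g (u + t • Pi.single j 1)) = fun _ => g u := by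
    funext t
    refine hg _ _ fun i hi => ?_
    have : i ≠ j := by rintro rfl; omega
    simp [this]
  rw [e, deriv_const]

/-- The operator `T_c` raises the index of the leading coordinate by one. -/
lemma IsTriangular.tc {s : ℕ} (c : ℝ) {k : ℕ} (hk : k + 1 < s) {F : (Fin s → ℝ) → ℝ}
    (hF : IsTriangular (⟨k, by omega⟩ : Fin s) F) :
    IsTriangular (⟨k + 1, hk⟩ : Fin s) (Tc s c F) := by
  obtain ⟨g, hs, hg, hFg⟩ := hF
  have h0 : 0 < s := by omega
  refine ⟨fun u => (∑ j : Fin s, if h : (j : ℕ) + 1 < s then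
        u ⟨(j : ℕ) + 1, h⟩ * fderiv ℝ g u (Pi.single j 1) else 0)
      + c * u ⟨0, h0⟩ * (u ⟨k, by omega⟩ + g u), ?_, ?_, ?_⟩
  · have hd : ContDiff ℝ (⊤ : ℕ∞) (fderiv ℝ g) := hs.fderiv_right (by simp)
    refine ContDiff.add (ContDiff.sum fun j _ => ?_) (by fun_prop)
    split_ifs
    · exact (contDiff_apply ℝ ℝ _).mul (hd.clm_apply contDiff_const)
    · exact contDiff_const
  · intro u v huv
    have huv' : AgreesBelow k u v := fun j hj => huv j (Nat.lt_succ_of_lt hj)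
    have e1 : u ⟨0, h0⟩ = v ⟨0, h0⟩ := huv _ (Nat.succ_pos k)
    have e2 : u ⟨k, by omega⟩ = v ⟨k, by omega⟩ := huv _ (Nat.lt_succ_self k)
    simp only [e1, e2, hg u v huv']
    congr 1
    refine Finset.sum_congr rfl fun j _ => ?_
    split_ifs with h
    · -- The coordinate `u_{j+1}` is multiplied by a derivative that vanishes unless `j < k`.
      rcases lt_or_ge (j : ℕ) k with hj | hj
      · rw [hg.fderiv_eq huv', huv ⟨(j : ℕ) + 1, h⟩ (Nat.succ_lt_succ hj)]
      · rw [hg.fderiv_single hs u hj, hg.fderiv_single hs v hj, mul_zero, mul_zero]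
    · rfl
  · intro u
    have hFd (j : Fin s) : fderiv ℝ F u (Pi.single j 1)
        = (if j = ⟨k, by omega⟩ then 1 else 0) + fderiv ℝ g u (Pi.single j 1) := by
      have hd : DifferentiableAt ℝ g u := hs.differentiable (by simp) u
      have hF' : HasFDerivAt F (ContinuousLinearMap.proj (R := ℝ) (φ := fun _ : Fin s => ℝ)
          (⟨k, by omega⟩ : Fin s) + fderiv ℝ g u) u := by
        rw [show F = fun u => u ⟨k, by omega⟩ + g u from funext hFg]
        exact (hasFDerivAt_apply _ u).add hd.hasFDerivAt
      rw [hF'.fderiv]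
      simp [Pi.single_apply, eq_comm]
    have hsum : (∑ j : Fin s, if h : (j : ℕ) + 1 < s then
        u ⟨(j : ℕ) + 1, h⟩ * (if j = ⟨k, by omega⟩ then (1 : ℝ) else 0) else 0)
        = u ⟨k + 1, hk⟩ := by
      rw [Finset.sum_eq_single (⟨k, by omega⟩ : Fin s)]
      · simp [hk]
      · intro j _ hj
        simp [hj]
      · simp
    rw [Tc, dif_pos h0, hFg u, ← hsum, ← add_assoc, ← Finset.sum_add_distrib]
    congr 1
    refine Finset.sum_congr rfl fun j _ => ?_
    split_ifs with h <;> simp_all [mul_add]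

lemma isTriangular_iterate {s : ℕ} (c : ℝ) (k : ℕ) (hk : k < s) :
    IsTriangular (⟨k, hk⟩ : Fin s) ((Tc s c)^[k] (proj0 s)) := by
  induction k with
  | zero =>
    exact ⟨fun _ => 0, contDiff_const, fun _ _ _ => rfl, fun u => by simp [proj0, hk]⟩
  | succ k ih =>
    rw [Function.iterate_succ_apply']
    exact (ih (by omega)).tc c hk

/-- One step of the iteration whose fixed points are the solutions `x` of `x + g(x) = y`. -/
def solveStep {s : ℕ} (g : Fin s → (Fin s → ℝ) → ℝ) (y x : Fin s → ℝ) : Fin s → ℝ :=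
  fun k => y k - g k x

/-- After `n` steps the first `n` coordinates no longer depend on the starting point. -/
lemma agreesBelow_iterate {s : ℕ} {g : Fin s → (Fin s → ℝ) → ℝ}
    (hg : ∀ k : Fin s, DependsBelow k (g k)) (y x x' : Fin s → ℝ) (n : ℕ) :
    AgreesBelow n ((solveStep g y)^[n] x) ((solveStep g y)^[n] x') := by
  induction n with
  | zero => exact fun j hj => absurd hj (Nat.not_lt_zero _)
  | succ n ih =>
    intro j hj
    rw [Function.iterate_succ_apply', Function.iterate_succ_apply']
    exact congrArg (y j - ·) (hg j _ _ fun i hi => ih i (by omega))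

lemma contDiff_iterate_solveStep {s : ℕ} {g : Fin s → (Fin s → ℝ) → ℝ}
    (hg : ∀ k, ContDiff ℝ (⊤ : ℕ∞) (g k)) (n : ℕ) :
    ContDiff ℝ (⊤ : ℕ∞) (fun y => (solveStep g y)^[n] 0) := by
  induction n with
  | zero => exact contDiff_const
  | succ n ih =>
    simp only [Function.iterate_succ_apply']
    exact contDiff_pi.2 fun k => (contDiff_apply ℝ ℝ k).sub ((hg k).comp ih)

/-- The map `φ_{s,c} : ℝ^s → ℝ^s`, `φ_{s,c}(u) = (y₁(u), …, y_s(u))` with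
`y_k = T_c^{k-1} π₀`, is a global diffeomorphism: a smooth bijection with smooth inverse. -/
theorem riccati_chain_global_diffeomorphism (s : ℕ) (hs : 1 ≤ s) (c : ℝ) :
    ∃ ψ : (Fin s → ℝ) → (Fin s → ℝ),
      ContDiff ℝ (⊤ : ℕ∞) (fun u (k : Fin s) => (Tc s c)^[(k : ℕ)] (proj0 s) u) ∧
      ContDiff ℝ (⊤ : ℕ∞) ψ ∧
      Function.LeftInverse ψ (fun u (k : Fin s) => (Tc s c)^[(k : ℕ)] (proj0 s) u) ∧
      Function.RightInverse ψ (fun u (k : Fin s) => (Tc s c)^[(k : ℕ)] (proj0 s) u) := by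
  choose g hs hg hF using fun k : Fin s => isTriangular_iterate c k k.2
  have hconst (y x x' : Fin s → ℝ) : (solveStep g y)^[s] x = (solveStep g y)^[s] x' :=
    funext fun j => agreesBelow_iterate hg y x x' s j j.2
  refine ⟨fun y => (solveStep g y)^[s] 0, ?_, contDiff_iterate_solveStep hs s, ?_, ?_⟩
  · refine contDiff_pi.2 fun k => ?_
    rw [funext (hF k)]
    exact (contDiff_apply ℝ ℝ k).add (hs k)
  · intro u
    -- `u` is a fixed point of the iteration with right-hand side `φ(u)`.
    have hfix : solveStep g (fun k : Fin s => (Tc s c)^[(k : ℕ)] (proj0 s) u) u = u := by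
      funext k
      simp [solveStep, hF k u]
    exact (hconst _ 0 u).trans (Function.iterate_fixed hfix s)
  · intro y
    -- The constant value of the `s`-th iterate is a fixed point.
    have hfix : solveStep g y ((solveStep g y)^[s] 0) = (solveStep g y)^[s] 0 := by
      rw [← Function.iterate_succ_apply' (solveStep g y), Function.iterate_succ_apply]
      exact hconst y _ _
    funext k
    have := congrFun hfix k
    simp only [solveStep] at this
    simp only [hF k]
    exact (sub_eq_iff_eq_add.1 this).symm
end

section
/- Let I ⊆ ℝ be an open interval, s ≥ 1 a natural number, c ∈ ℝ, and let u : I → ℝ be s-times continuously differentiable and α₀,…,α_s : I → ℝ continuous. Define ξ₁ := u and recursively ξ_{k+1} := ξ_k′ + c·u·ξ_k for k = 1,…,s−1 (so ξ_k = L_c^{k−1}u). If u satisfies the s-order Riccati chain equation, i.e. ξ_s′(x) + c·u(x)·ξ_s(x) + Σ_{j=1}^{s} α_j(x)·ξ_j(x) + α₀(x) = 0 for all x ∈ I, then the curve ξ := (ξ₁,…,ξ_s) : I → ℝ^s satisfies on all of I the projective Riccati equation: ξ_k′ = ξ_{k+1} − c·ξ₁·ξ_k for k = 1,…,s−1, and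 ξ_s′ = −α₀ − Σ_{j=1}^{s} α_j ξ_j − c·ξ₁·ξ_s. Equivalently, ξ′(x) = b₀(x) + C(x)ξ(x) + ⟨ξ(x), b₂⟩ ξ(x), where b₀(x) = (0,…,0,−α₀(x))ᵀ, b₂ = (−c,0,…,0)ᵀ, ⟨·,·⟩ is the standard inner product on ℝ^s, and C(x) is the s×s matrix whose (k, k+1) entries are 1 for k = 1,…,s−1, whose last row is (−α₁(x),…,−α_s(x)), and whose remaining entries are 0. -/
/-!
Each step `ξ_k ↦ ξ_k' + c·u·ξ_k` of the chain costs exactly one derivative, so if `u` is `C^s` on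
the open set `I`, then `ξ_{k+1} = xiChain c u k` is `C^(s-k)` there (`contDiffOn_xiChain`). Hence
`ξ_1, …, ξ_s` are differentiable on `I` (`hasDerivAt_xiChain`). The equations for `k < s` are then
the recursion solved for `ξ_k'`, and the last one is the Riccati chain equation solved for `ξ_s'`.
-/

open scoped BigOperators

/-- The iterated expressions `ξ_{k+1} = L_c^k u` of the Riccati hierarchy:
`ξ₁ = u` and `ξ_{k+1} = ξ_k' + c·u·ξ_k` (here `xiChain c u k = ξ_{k+1}`). -/
noncomputable def xiChain (c : ℝ) (u : ℝ → ℝ) : ℕ → ℝ → ℝ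
  | 0 => u
  | k + 1 => fun x => deriv (xiChain c u k) x + c * u x * xiChain c u k x

theorem contDiffOn_xiChain {I : Set ℝ} (hI : IsOpen I) {s : ℕ} {c : ℝ} {u : ℝ → ℝ}
    (hu : ContDiffOn ℝ (s : ℕ∞) u I) (k m : ℕ) (h : k + m ≤ s) :
    ContDiffOn ℝ m (xiChain c u k) I := by
  have hu' : ∀ n : ℕ, n ≤ s → ContDiffOn ℝ n u I := fun n hn =>
    hu.of_le (by exact_mod_cast hn)
  induction k generalizing m with
  | zero => exact hu' m (by omega)
  | succ k ih =>
    have h1 : ContDiffOn ℝ m (deriv (xiChain c u k)) I :=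
      (ih (m + 1) (by omega)).deriv_of_isOpen hI (by norm_cast)
    exact h1.add ((contDiffOn_const.mul (hu' m (by omega))).mul (ih m (by omega)))

theorem hasDerivAt_xiChain {I : Set ℝ} (hI : IsOpen I) {s : ℕ} {c : ℝ} {u : ℝ → ℝ}
    (hu : ContDiffOn ℝ (s : ℕ∞) u I) {k : ℕ} (hk : k < s) {x : ℝ} (hx : x ∈ I) :
    HasDerivAt (xiChain c u k) (deriv (xiChain c u k) x) x :=
  (((contDiffOn_xiChain hI hu k 1 (by omega)).differentiableOn (by simp)).differentiableAt
    (hI.mem_nhds hx)).hasDerivAt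

/-- If `u : I → ℝ` is `C^s` on an open interval `I` and satisfies the `s`-order Riccati
chain equation `L_c^s u + Σ_{j=1}^s α_j·L_c^{j-1}u + α₀ = 0`, then the curve
`ξ = (ξ₁, …, ξ_s) = (u, L_c u, …, L_c^{s-1}u)` satisfies on `I` the projective Riccati
equation: `ξ_k' = ξ_{k+1} - c·ξ₁·ξ_k` for `k = 1, …, s-1`, and
`ξ_s' = -α₀ - Σ_{j=1}^s α_j·ξ_j - c·ξ₁·ξ_s`. -/
theorem riccati_chain_to_projective_riccati
    (I : Set ℝ) (hI : IsOpen I) (hI' : I.OrdConnected)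
    (s : ℕ) (hs : 1 ≤ s) (c : ℝ) (u : ℝ → ℝ) (α : ℕ → ℝ → ℝ)
    (hu : ContDiffOn ℝ (s : ℕ∞) u I) (hα : ∀ j ≤ s, ContinuousOn (α j) I)
    (hODE : ∀ x ∈ I,
      deriv (xiChain c u (s - 1)) x + c * u x * xiChain c u (s - 1) x
        + (∑ j ∈ Finset.Icc 1 s, α j x * xiChain c u (j - 1) x) + α 0 x = 0) :
    (∀ k : ℕ, 1 ≤ k → k ≤ s - 1 → ∀ x ∈ I,
      HasDerivAt (xiChain c u (k - 1))
        (xiChain c u k x - c * xiChain c u 0 x * xiChain c u (k - 1) x) x) ∧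
    (∀ x ∈ I,
      HasDerivAt (xiChain c u (s - 1))
        (-(α 0 x) - (∑ j ∈ Finset.Icc 1 s, α j x * xiChain c u (j - 1) x)
          - c * xiChain c u 0 x * xiChain c u (s - 1) x) x) := by
  refine ⟨fun k hk1 hks x hx => ?_, fun x hx => ?_⟩
  · obtain ⟨j, rfl⟩ : ∃ j, k = j + 1 := ⟨k - 1, by omega⟩
    rw [Nat.add_sub_cancel]
    refine (hasDerivAt_xiChain hI hu (k := j) (by omega) hx).congr_deriv ?_
    simp only [xiChain]
    ring
  · refine (hasDerivAt_xiChain hI hu (k := s - 1) (by omega) hx).congr_deriv ?_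
    rw [show xiChain c u 0 x = u x from rfl]
    linear_combination hODE x hx
end

section
/- Let s ≥ 2. The set V of all vector fields Z : ℝ^s → ℝ^s of the form Zⁱ(y) = aⁱ + Σ_{k=1}^{s} bⁱ_k y^k + yⁱ·Σ_{k=1}^{s} c_k y^k (for arbitrary real constants aⁱ, bⁱ_k, c_k) is a real Lie subalgebra of the Lie algebra of smooth vector fields on ℝ^s with bracket [Z,W](p) := (DW)_p(Z(p)) − (DZ)_p(W(p)): it is closed under this bracket, it is a real vector space of dimension s² + 2s = (s+1)² − 1, and it is isomorphic as a real Lie algebra to sl(s+1, ℝ), the Lie algebra of traceless real (s+1)×(s+1) matrices with the commutator bracket. -/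
/-!
A matrix `M` acts linearly on `ℝ^(s+1)`, hence on the affine chart `y ↦ ŷ = (1, y)` of projective
space. Up to sign, the induced vector field on the chart is `Φ(M)ⁱ(y) = yⁱ (Mŷ)₀ - (Mŷ)ᵢ₊₁`; the
sign is the one that turns the anti-homomorphism from matrices to linear vector fields into a
homomorphism. Expanding, `Φ(M)` has the quadratic form defining `Vset`, and as `M` ranges over
traceless matrices every coefficient triple `(a, b, c)` is attained, because adding a scalar matrix
to `M` does not change `Φ(M)` (`range_projFieldSl`). Conversely `Φ(M) = 0` forces `M` to be scalar,
so `Φ` is injective on `sl(s+1)` (`projFieldSl_injective`).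

The bracket identity `[Φ(M), Φ(N)] = Φ(MN - NM)` (`lieBr_projField`) rests on the equality
`(0, Φ(M)(y)) = (Mŷ)₀ ŷ - Mŷ`: it reduces the derivative terms to products of entries of `Mŷ`,
`Nŷ`, `MNŷ`, `NMŷ`, and all terms not involving `MN` or `NM` are symmetric in `M`, `N`.
The dimension is then that of the kernel of the trace, by rank–nullity.
-/


open scoped BigOperators

/-- The Lie bracket of vector fields on `ℝ^s`, identified with smooth maps
`ℝ^s → ℝ^s`: `[Z,W](p) = (DW)_p(Z(p)) - (DZ)_p(W(p))`. -/
noncomputable def lieBr (s : ℕ) (Z W : (Fin s → ℝ) → (Fin s → ℝ)) :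
    (Fin s → ℝ) → (Fin s → ℝ) :=
  fun p => fderiv ℝ W p (Z p) - fderiv ℝ Z p (W p)

/-- The set of vector fields `Zⁱ(y) = aⁱ + Σ_k bⁱ_k y^k + yⁱ·Σ_k c_k y^k` on `ℝ^s`
(the projective vector fields of the flat Euclidean metric). -/
def Vset (s : ℕ) : Set ((Fin s → ℝ) → (Fin s → ℝ)) :=
  {Z | ∃ (a : Fin s → ℝ) (b : Fin s → Fin s → ℝ) (cc : Fin s → ℝ),
    ∀ (i : Fin s) (y : Fin s → ℝ),
      Z y i = a i + (∑ k, b i k * y k) + y i * (∑ k, cc k * y k)}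
/-- The vector field `y ↦ y (Mŷ)₀ - (Mŷ)₊`, where `ŷ = (1, y)` and `₊` drops the zeroth coordinate:
minus the field induced by the linear action of `M` on the affine chart `x₀ = 1` of projective
space. -/
def projField (s : ℕ) :
    Matrix (Fin (s + 1)) (Fin (s + 1)) ℝ →ₗ[ℝ] ((Fin s → ℝ) → (Fin s → ℝ)) where
  toFun M y i := y i * (M.mulVec (Fin.cons 1 y : Fin (s + 1) → ℝ)) 0
    - (M.mulVec (Fin.cons 1 y : Fin (s + 1) → ℝ)) i.succ
  map_add' M N := by
    funext y i
    simp only [Matrix.add_mulVec, Pi.add_apply]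
    ring
  map_smul' r M := by
    funext y i
    simp only [Matrix.smul_mulVec, Pi.smul_apply, smul_eq_mul, RingHom.id_apply]
    ring

lemma projField_apply (s : ℕ) (M : Matrix (Fin (s + 1)) (Fin (s + 1)) ℝ) (y : Fin s → ℝ)
    (i : Fin s) :
    projField s M y i = y i * (M.mulVec (Fin.cons 1 y : Fin (s + 1) → ℝ)) 0
      - (M.mulVec (Fin.cons 1 y : Fin (s + 1) → ℝ)) i.succ := rfl

lemma mulVec_cons (s : ℕ) (M : Matrix (Fin (s + 1)) (Fin (s + 1)) ℝ) (r : ℝ) (y : Fin s → ℝ)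
    (j : Fin (s + 1)) :
    (M.mulVec (Fin.cons r y : Fin (s + 1) → ℝ)) j = M j 0 * r + ∑ k, M j (Fin.succ k) * y k := by
  simp [Matrix.mulVec, dotProduct, Fin.sum_univ_succ]

lemma hasFDerivAt_mulVec_cons (s : ℕ) (M : Matrix (Fin (s + 1)) (Fin (s + 1)) ℝ)
    (p : Fin s → ℝ) (j : Fin (s + 1)) :
    HasFDerivAt (fun y : Fin s → ℝ => (M.mulVec (Fin.cons 1 y : Fin (s + 1) → ℝ)) j)
      (∑ k, M j (Fin.succ k) • ContinuousLinearMap.proj (R := ℝ) (φ := fun _ : Fin s => ℝ) k) p := by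
  simp only [mulVec_cons]
  refine HasFDerivAt.const_add _ (HasFDerivAt.fun_sum fun k _ => ?_)
  exact (hasFDerivAt_apply k p).const_mul _

lemma fderiv_projField (s : ℕ) (M : Matrix (Fin (s + 1)) (Fin (s + 1)) ℝ) (p v : Fin s → ℝ)
    (i : Fin s) :
    fderiv ℝ (projField s M) p v i =
      v i * (M.mulVec (Fin.cons 1 p : Fin (s + 1) → ℝ)) 0
      + p i * (M.mulVec (Fin.cons 0 v : Fin (s + 1) → ℝ)) 0
      - (M.mulVec (Fin.cons 0 v : Fin (s + 1) → ℝ)) i.succ := by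
  have h : ∀ i : Fin s, HasFDerivAt (fun y => projField s M y i) _ p := fun i =>
    ((hasFDerivAt_apply i p).mul (hasFDerivAt_mulVec_cons s M p 0)).sub
      (hasFDerivAt_mulVec_cons s M p i.succ)
  rw [(hasFDerivAt_pi.2 h).fderiv]
  simp [mulVec_cons]
  ring

/-- `(0, Φ(M)(y)) = (Mŷ)₀ ŷ - Mŷ`. -/
lemma cons_zero_projField (s : ℕ) (M : Matrix (Fin (s + 1)) (Fin (s + 1)) ℝ) (y : Fin s → ℝ) :
    (Fin.cons 0 (projField s M y) : Fin (s + 1) → ℝ) =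
      (M.mulVec (Fin.cons 1 y : Fin (s + 1) → ℝ)) 0 • (Fin.cons 1 y : Fin (s + 1) → ℝ)
        - M.mulVec (Fin.cons 1 y : Fin (s + 1) → ℝ) := by
  funext j
  refine Fin.cases ?_ (fun i => ?_) j
  · simp
  · simp [projField_apply, mul_comm]

lemma lieBr_projField (s : ℕ) (M N : Matrix (Fin (s + 1)) (Fin (s + 1)) ℝ) :
    lieBr s (projField s M) (projField s N) = projField s (M * N - N * M) := by
  funext p i
  simp only [lieBr, Pi.sub_apply, fderiv_projField, cons_zero_projField, Matrix.mulVec_sub,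
    Matrix.mulVec_smul, Matrix.mulVec_mulVec, Pi.smul_apply, smul_eq_mul]
  simp only [projField_apply, Matrix.sub_mulVec, Pi.sub_apply]
  ring

/-- The map `Φ` restricted to traceless matrices. -/
def projFieldSl (s : ℕ) :
    LieAlgebra.SpecialLinear.sl (Fin (s + 1)) ℝ →ₗ[ℝ] ((Fin s → ℝ) → (Fin s → ℝ)) where
  toFun A := projField s A.1
  map_add' A B := map_add (projField s) A.1 B.1
  map_smul' r A := map_smul (projField s) r A.1

lemma projFieldSl_apply (s : ℕ) (A : LieAlgebra.SpecialLinear.sl (Fin (s + 1)) ℝ) :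
    projFieldSl s A = projField s A.1 := rfl

lemma mem_sl_iff (s : ℕ) (M : Matrix (Fin (s + 1)) (Fin (s + 1)) ℝ) :
    M ∈ LieAlgebra.SpecialLinear.sl (Fin (s + 1)) ℝ ↔ M.trace = 0 := Iff.rfl

lemma projField_mem_Vset (s : ℕ) (M : Matrix (Fin (s + 1)) (Fin (s + 1)) ℝ) :
    projField s M ∈ Vset s := by
  refine ⟨fun i => -M i.succ 0, fun i k => (if i = k then M 0 0 else 0) - M i.succ k.succ,
    fun k => M 0 k.succ, fun i y => ?_⟩
  simp only [projField_apply, mulVec_cons, sub_mul, Finset.sum_sub_distrib, ite_mul, zero_mul,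
    Finset.sum_ite_eq, Finset.mem_univ, if_true]
  ring

lemma range_projFieldSl (s : ℕ) : Set.range (projFieldSl s) = Vset s := by
  apply Set.Subset.antisymm
  · rintro _ ⟨A, rfl⟩
    exact projField_mem_Vset s A.1
  · rintro Z ⟨a, b, c, hZ⟩
    -- The scalar summand `t` is the one making the matrix below traceless.
    set t : ℝ := (∑ i, b i i) / (s + 1) with ht
    let M : Matrix (Fin (s + 1)) (Fin (s + 1)) ℝ := Matrix.of
      (Fin.cons (Fin.cons t c)
        (fun i => Fin.cons (-a i) (fun k => (if i = k then t else 0) - b i k)))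
    have hM : M.trace = 0 := by
      have hs : (s + 1 : ℝ) ≠ 0 := by positivity
      simp [M, Matrix.trace, Fin.sum_univ_succ, Finset.sum_sub_distrib]
      rw [ht]
      field_simp
      ring
    refine ⟨⟨M, hM⟩, ?_⟩
    funext y i
    rw [hZ, projFieldSl_apply, projField_apply]
    simp only [mulVec_cons, M, Matrix.of_apply, Fin.cons_zero, Fin.cons_succ, sub_mul,
      Finset.sum_sub_distrib, ite_mul, zero_mul, Finset.sum_ite_eq, Finset.mem_univ, if_true]
    ring

lemma projFieldSl_injective (s : ℕ) : Function.Injective (projFieldSl s) := by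
  rw [← LinearMap.ker_eq_bot, LinearMap.ker_eq_bot']
  rintro ⟨M, hM⟩ h
  rw [mem_sl_iff] at hM
  rw [projFieldSl_apply] at h
  -- Evaluating on the line through the `j`-th basis vector.
  have key : ∀ (r : ℝ) (i j : Fin s), (if i = j then r else 0) * (M 0 0 + M 0 j.succ * r)
      - (M i.succ 0 + M i.succ j.succ * r) = 0 := by
    intro r i j
    have := congrFun (congrFun h (Pi.single j r)) i
    simpa [projField_apply, mulVec_cons, Pi.single_apply] using this
  have h0 : ∀ i : Fin s, M i.succ 0 = 0 := fun i => by simpa using key 0 i i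
  have h1 : ∀ j : Fin s, M 0 j.succ = 0 := fun j => by
    have e1 := key 1 j j
    have e2 := key (-1) j j
    simp [h0] at e1 e2
    linarith
  have h2 : ∀ i j : Fin s, M i.succ j.succ = if i = j then M 0 0 else 0 := fun i j => by
    have e1 := key 1 i j
    simp [h0, h1] at e1
    linarith
  have h3 : M 0 0 = 0 := by
    have hs : (s + 1 : ℝ) ≠ 0 := by positivity
    simp [Matrix.trace, Fin.sum_univ_succ, h2] at hM
    exact (mul_eq_zero.1 (by linarith : ((s : ℝ) + 1) * M 0 0 = 0)).resolve_left hs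
  apply Subtype.ext
  ext i j
  refine Fin.cases ?_ (fun i => ?_) i <;> refine Fin.cases ?_ (fun j => ?_) j <;>
    simp [h0, h1, h2, h3]

lemma finrank_sl (s : ℕ) :
    Module.finrank ℝ (LieAlgebra.SpecialLinear.sl (Fin (s + 1)) ℝ) = s ^ 2 + 2 * s := by
  have h := LinearMap.finrank_range_add_finrank_ker (Matrix.traceLinearMap (Fin (s + 1)) ℝ ℝ)
  have hr : LinearMap.range (Matrix.traceLinearMap (Fin (s + 1)) ℝ ℝ) = ⊤ := by
    rw [LinearMap.range_eq_top]
    exact fun r => ⟨Matrix.single 0 0 r, by simp⟩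
  rw [hr, finrank_top, Module.finrank_self, Module.finrank_matrix] at h
  have h' : 1 + Module.finrank ℝ (LieAlgebra.SpecialLinear.sl (Fin (s + 1)) ℝ) =
      Fintype.card (Fin (s + 1)) * Fintype.card (Fin (s + 1)) * 1 := by
    rw [Module.finrank_self] at h
    exact h
  simp only [Fintype.card_fin] at h'
  nlinarith

/-- For `s ≥ 2`, the set `V` of vector fields of the quadratic form
`Zⁱ(y) = aⁱ + Σ_k bⁱ_k y^k + yⁱ Σ_k c_k y^k` is closed under the Lie bracket of vector
fields, is a real linear subspace of dimension `s² + 2s = (s+1)² - 1`, and is isomorphic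
as a real Lie algebra to `sl(s+1, ℝ)` (traceless `(s+1)×(s+1)` real matrices with the
commutator bracket), via a bracket-preserving linear equivalence. -/
theorem projective_vector_fields_isomorphic_sl (s : ℕ) (hs : 2 ≤ s) :
    (∀ Z ∈ Vset s, ∀ W ∈ Vset s, lieBr s Z W ∈ Vset s) ∧
    (Vset s = (Submodule.span ℝ (Vset s) : Set ((Fin s → ℝ) → (Fin s → ℝ)))) ∧
    (Module.finrank ℝ (Submodule.span ℝ (Vset s)) = s ^ 2 + 2 * s) ∧
    (∃ e : Submodule.span ℝ (Vset s) ≃ₗ[ℝ] LieAlgebra.SpecialLinear.sl (Fin (s + 1)) ℝ,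
      ∀ (Z W : Submodule.span ℝ (Vset s))
        (h : lieBr s Z.1 W.1 ∈ Submodule.span ℝ (Vset s)),
          e ⟨lieBr s Z.1 W.1, h⟩ = ⁅e Z, e W⁆) := by
  have hspan : LinearMap.range (projFieldSl s) = Submodule.span ℝ (Vset s) := by
    rw [← range_projFieldSl, ← LinearMap.coe_range, Submodule.span_eq]
  let f : LieAlgebra.SpecialLinear.sl (Fin (s + 1)) ℝ ≃ₗ[ℝ] Submodule.span ℝ (Vset s) :=
    (LinearEquiv.ofInjective _ (projFieldSl_injective s)).trans (LinearEquiv.ofEq _ _ hspan)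
  have hf : ∀ A, (f A).1 = projField s A.1 := fun A => rfl
  refine ⟨?_, ?_, ?_, f.symm, ?_⟩
  · intro Z hZ W hW
    rw [← range_projFieldSl] at hZ hW
    obtain ⟨A, rfl⟩ := hZ
    obtain ⟨B, rfl⟩ := hW
    rw [projFieldSl_apply, projFieldSl_apply, lieBr_projField]
    exact projField_mem_Vset s _
  · rw [← hspan, LinearMap.coe_range, range_projFieldSl]
  · rw [← f.finrank_eq, finrank_sl]
  · intro Z W h
    obtain ⟨A, rfl⟩ := f.surjective Z
    obtain ⟨B, rfl⟩ := f.surjective W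
    rw [LinearEquiv.symm_apply_eq, LinearEquiv.symm_apply_apply, LinearEquiv.symm_apply_apply]
    apply Subtype.ext
    exact lieBr_projField s A.1 B.1
end

section
/- Let n ≥ 2 and let X₁, X₂ : ℝⁿ → ℝⁿ be smooth vector fields each of which is conformal with respect to the standard Euclidean inner product ⟨·,·⟩ on ℝⁿ, i.e. for i = 1, 2 there is a smooth function fᵢ : ℝⁿ → ℝ with ⟨(DXᵢ)_p v, w⟩ + ⟨v, (DXᵢ)_p w⟩ = fᵢ(p)·⟨v, w⟩ for all p, v, w ∈ ℝⁿ. If X₁(p) and X₂(p) are linearly dependent vectors for every p ∈ ℝⁿ (i.e. X₁ ∧ X₂ = 0 pointwise), then X₁ and X₂ are linearly dependent over ℝ as elements of the vector space of maps ℝⁿ → ℝⁿ: there exist (λ₁, λ₂) ≠ (0,0) with λ₁X₁ + λ₂X₂ = 0 identically. -/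
/-!
The two ingredients are a local computation and a unique continuation principle.

Locally: where `X₁ ≠ 0`, pointwise dependence gives `X₂ = g X₁` with `g` smooth. Subtracting
the two conformality equations leaves `dg(v) ⟨X₁, w⟩ + dg(w) ⟨X₁, v⟩ = h ⟨v, w⟩`. Testing on
`v = w ⊥ X₁` (possible as `n ≥ 2`) gives `h = 0`, and then testing on `v = X₁` gives `dg = 0`.
So `Y = X₂ - c X₁` vanishes on a ball for some constant `c`.

Unique continuation: `Y` is conformal. Its orthogonal projection to any affine 2-plane, restricted
to that plane, is again conformal, i.e. satisfies the Cauchy-Riemann equations, hence is an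
entire function. If `Y` vanishes near `p`, the identity theorem in the planes through `p` and `q`
shows that `Y q` is orthogonal to every such plane, so that `Y q = 0`.
-/

open scoped RealInnerProductSpace

/-- Conformality of a vector field `X` with conformal factor `f`: the Lie derivative along `X`
of the Euclidean metric is `f` times the metric. -/
def IsConformalField {E : Type*} [NormedAddCommGroup E] [InnerProductSpace ℝ E]
    (X : E → E) (f : E → ℝ) : Prop :=
  ∀ p v w : E, ⟪fderiv ℝ X p v, w⟫ + ⟪v, fderiv ℝ X p w⟫ = f p * ⟪v, w⟫

section

variable {E : Type*} [NormedAddCommGroup E] [InnerProductSpace ℝ E]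

lemma exists_orthogonal_norm_eq [FiniteDimensional ℝ E] (hE : 2 ≤ Module.finrank ℝ E)
    (x : E) {r : ℝ} (hr : 0 ≤ r) : ∃ v : E, ⟪x, v⟫ = 0 ∧ ‖v‖ = r := by
  have h1 : Module.finrank ℝ (ℝ ∙ x) ≤ 1 := by
    simpa using finrank_span_le_card (R := ℝ) ({x} : Set E)
  have h2 := Submodule.finrank_add_finrank_orthogonal (ℝ ∙ x)
  have : Nontrivial ((ℝ ∙ x)ᗮ : Submodule ℝ E) :=
    Module.nontrivial_of_finrank_pos (R := ℝ) (by omega)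
  obtain ⟨v, hv⟩ := exists_norm_eq ((ℝ ∙ x)ᗮ : Submodule ℝ E) hr
  exact ⟨v, Submodule.mem_orthogonal_singleton_iff_inner_right.1 v.2, hv⟩

/-- Projecting a conformal field to the plane spanned by `u ⊥ v` of equal length gives an entire
function of `z ↦ p + z.re • u + z.im • v`; if the field vanishes near `p`, the projection
vanishes on the whole plane, in particular at `p + u`. -/
lemma IsConformalField.inner_eq_zero_of_eventually {Y : E → E} {f : E → ℝ}
    (hc : IsConformalField Y f) (hY : Differentiable ℝ Y) {p u v : E}
    (h0 : ∀ᶠ x in nhds p, Y x = 0) (huv : ⟪u, v⟫ = 0) (hn : ‖v‖ = ‖u‖) :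
    ⟪u, Y (p + u)⟫ = 0 ∧ ⟪v, Y (p + u)⟫ = 0 := by
  let L : ℂ →L[ℝ] E := Complex.reCLM.smulRight u + Complex.imCLM.smulRight v
  let P : E →L[ℝ] ℂ := Complex.ofRealCLM ∘L innerSL ℝ u +
    Complex.I • (Complex.ofRealCLM ∘L innerSL ℝ v)
  let F : ℂ → ℂ := fun z => P (Y (p + L z))
  have hF : ∀ z, HasFDerivAt F (P ∘L (fderiv ℝ Y (p + L z)) ∘L L) z := fun z =>
    P.hasFDerivAt.comp z ((hY (p + L z)).hasFDerivAt.comp z (L.hasFDerivAt.const_add p))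
  have hd : Differentiable ℂ F := by
    intro z
    rw [differentiableAt_complex_iff_differentiableAt_real]
    refine ⟨(hF z).differentiableAt, ?_⟩
    rw [(hF z).fderiv]
    generalize p + L z = q
    have e1 := hc q u u
    have e2 := hc q v v
    have e3 := hc q u v
    rw [huv] at e3
    rw [real_inner_self_eq_norm_sq] at e1 e2
    rw [hn] at e2
    rw [real_inner_comm] at e1 e2 e3
    apply Complex.ext <;> simp [P, L] <;> linarith
  have hz : F =ᶠ[nhds 0] fun _ => 0 := by
    have ht : Filter.Tendsto (fun z => p + L z) (nhds 0) (nhds p) := by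
      have : Continuous fun z => p + L z := by fun_prop
      simpa using this.tendsto 0
    filter_upwards [ht.eventually h0] with z hz
    simp [F, hz]
  have hA : AnalyticOnNhd ℂ F Set.univ := fun z _ => hd.analyticAt z
  have hF0 : F = fun _ => 0 :=
    AnalyticOnNhd.eq_of_eventuallyEq hA (fun z _ => analyticAt_const) hz
  have h1 := congrFun hF0 1
  have hr := congrArg Complex.re h1
  have hi := congrArg Complex.im h1
  simp [F, P, L] at hr hi
  exact ⟨hr, hi⟩

/-- Unique continuation for conformal fields in dimension at least two. -/
lemma IsConformalField.eq_zero_of_eventually [FiniteDimensional ℝ E]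
    (hE : 2 ≤ Module.finrank ℝ E) {Y : E → E} {f : E → ℝ}
    (hc : IsConformalField Y f) (hY : Differentiable ℝ Y) {p : E}
    (h0 : ∀ᶠ x in nhds p, Y x = 0) (q : E) : Y q = 0 := by
  obtain ⟨u, rfl⟩ : ∃ u, q = p + u := ⟨q - p, by simp⟩
  obtain ⟨v, huv, hv⟩ := exists_orthogonal_norm_eq hE u (norm_nonneg u)
  have hu := (hc.inner_eq_zero_of_eventually hY h0 huv hv).1
  by_contra hne
  have hne' : ‖Y (p + u)‖ ≠ 0 := norm_ne_zero_iff.2 hne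
  rcases eq_or_ne u 0 with rfl | hu0
  · exact hne (by simpa using h0.self_of_nhds)
  -- `Y q` is orthogonal to `u`, so its rescaling can serve as the second vector of the plane.
  have := (hc.inner_eq_zero_of_eventually hY h0 (u := u)
    (v := (‖u‖ / ‖Y (p + u)‖) • Y (p + u)) (by simp [inner_smul_right, hu])
    (by rw [norm_smul, norm_div, norm_norm, norm_norm, div_mul_cancel₀ _ hne'])).2
  rw [inner_smul_left, real_inner_self_eq_norm_sq] at this
  simp [hne, hu0] at this

/-- The derivative of the ratio `g` of two conformal fields `X₂ = g X₁` vanishes wherever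
`X₁` does not. -/
lemma fderiv_ratio_eq_zero [FiniteDimensional ℝ E] (hE : 2 ≤ Module.finrank ℝ E)
    {X₁ X₂ : E → E} {f₁ f₂ g : E → ℝ} (hc₁ : IsConformalField X₁ f₁)
    (hc₂ : IsConformalField X₂ f₂) {p : E} (hX₁ : DifferentiableAt ℝ X₁ p)
    (hg : DifferentiableAt ℝ g p) (h : X₂ =ᶠ[nhds p] fun x => g x • X₁ x) (hp : X₁ p ≠ 0) :
    fderiv ℝ g p = 0 := by
  have hD : ∀ v, fderiv ℝ X₂ p v = g p • fderiv ℝ X₁ p v + fderiv ℝ g p v • X₁ p := by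
    intro v
    rw [h.fderiv_eq, fderiv_fun_smul hg hX₁]
    simp
  have key : ∀ v w, fderiv ℝ g p v * ⟪X₁ p, w⟫ + fderiv ℝ g p w * ⟪X₁ p, v⟫ =
      (f₂ p - g p * f₁ p) * ⟪v, w⟫ := by
    intro v w
    have e1 := hc₁ p v w
    have e2 := hc₂ p v w
    rw [hD, hD, inner_add_left, inner_add_right, inner_smul_left, inner_smul_left,
      inner_smul_right, inner_smul_right, real_inner_comm (X₁ p) v] at e2
    simp only [conj_trivial] at e2
    linear_combination e2 - g p * e1
  obtain ⟨v, hv, hv1⟩ := exists_orthogonal_norm_eq hE (X₁ p) zero_le_one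
  have hh : f₂ p - g p * f₁ p = 0 := by
    have := key v v
    rw [hv, real_inner_self_eq_norm_sq, hv1] at this
    linarith
  have hX : ⟪X₁ p, X₁ p⟫ ≠ 0 := inner_self_ne_zero.2 hp
  have hgX : fderiv ℝ g p (X₁ p) = 0 := by
    have := key (X₁ p) (X₁ p)
    rw [hh, zero_mul, ← two_mul] at this
    simpa [hp] using this
  ext w
  have := key (X₁ p) w
  rw [hh, hgX] at this
  simpa [hp] using this

lemma IsConformalField.smul_add {X₁ X₂ : E → E} {f₁ f₂ : E → ℝ}
    (hc₁ : IsConformalField X₁ f₁) (hc₂ : IsConformalField X₂ f₂)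
    (hd₁ : Differentiable ℝ X₁) (hd₂ : Differentiable ℝ X₂) (c : ℝ) :
    IsConformalField (fun p => c • X₁ p + X₂ p) (fun p => c * f₁ p + f₂ p) := by
  intro p v w
  have e1 := hc₁ p v w
  have e2 := hc₂ p v w
  have hD : ∀ x, fderiv ℝ (fun p => c • X₁ p + X₂ p) p x =
      c • fderiv ℝ X₁ p x + fderiv ℝ X₂ p x := fun x => by
    rw [(((hd₁ p).hasFDerivAt.fun_const_smul c).fun_add (hd₂ p).hasFDerivAt).fderiv]
    simp
  rw [hD, hD]
  simp only [inner_add_left, inner_add_right, inner_smul_left, inner_smul_right, conj_trivial]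
  linear_combination c * e1 + e2

/-- The theorem in a coordinate-free Euclidean space, where only differentiability is needed. -/
lemma IsConformalField.exists_smul_add_smul_eq_zero [FiniteDimensional ℝ E]
    (hE : 2 ≤ Module.finrank ℝ E) {X₁ X₂ : E → E} {f₁ f₂ : E → ℝ}
    (hc₁ : IsConformalField X₁ f₁) (hc₂ : IsConformalField X₂ f₂)
    (hd₁ : Differentiable ℝ X₁) (hd₂ : Differentiable ℝ X₂)
    (hdep : ∀ p : E, ∃ a b : ℝ, (a, b) ≠ (0, 0) ∧ a • X₁ p + b • X₂ p = 0) :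
    ∃ l₁ l₂ : ℝ, (l₁, l₂) ≠ (0, 0) ∧ ∀ p, l₁ • X₁ p + l₂ • X₂ p = 0 := by
  by_cases hX : ∀ p, X₁ p = 0
  · exact ⟨1, 0, by simp, fun p => by simp [hX p]⟩
  push Not at hX
  obtain ⟨p₀, hp₀⟩ := hX
  obtain ⟨r, hr, hball⟩ := Metric.eventually_nhds_iff_ball.1
    (hd₁.continuous.continuousAt.eventually_ne hp₀)
  -- The ratio `X₂ / X₁`; it is meaningful only where `X₁` does not vanish.
  obtain ⟨g, hg_def⟩ : ∃ g : E → ℝ, g = fun p => ⟪X₁ p, X₂ p⟫ / ⟪X₁ p, X₁ p⟫ := ⟨_, rfl⟩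
  have hg : ∀ p, X₁ p ≠ 0 → X₂ p = g p • X₁ p := by
    intro p hp
    obtain ⟨a, b, hab, h⟩ := hdep p
    have hb : b ≠ 0 := by
      rintro rfl
      simp_all
    have h2 : X₂ p = (-a / b) • X₁ p := by
      have : b • X₂ p = (-a) • X₁ p := by
        rw [neg_smul]; exact eq_neg_of_add_eq_zero_right h
      rw [div_eq_inv_mul, mul_smul, ← this, inv_smul_smul₀ hb]
    have hX : ⟪X₁ p, X₁ p⟫ ≠ 0 := inner_self_ne_zero.2 hp
    have : g p = -a / b := by
      rw [hg_def]
      beta_reduce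
      rw [h2, inner_smul_right, mul_div_cancel_right₀ _ hX]
    rw [this, h2]
  have hgd : ∀ p, X₁ p ≠ 0 → DifferentiableAt ℝ g p := by
    intro p hp
    rw [hg_def]
    have hX : ⟪X₁ p, X₁ p⟫ ≠ 0 := inner_self_ne_zero.2 hp
    simp only [div_eq_mul_inv]
    exact ((hd₁ p).inner ℝ (hd₂ p)).fun_mul (((hd₁ p).inner ℝ (hd₁ p)).fun_inv hX)
  have hconst : ∀ p ∈ Metric.ball p₀ r, g p = g p₀ := by
    intro p hp
    refine (convex_ball p₀ r).is_const_of_fderivWithin_eq_zero (𝕜 := ℝ)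
      (fun x hx => (hgd x (hball x hx)).differentiableWithinAt) (fun x hx => ?_) hp
      (Metric.mem_ball_self hr)
    rw [fderivWithin_of_isOpen Metric.isOpen_ball hx]
    refine fderiv_ratio_eq_zero hE hc₁ hc₂ (hd₁ x) (hgd x (hball x hx)) ?_ (hball x hx)
    filter_upwards [hd₁.continuous.continuousAt.eventually_ne (hball x hx)] with y hy
    exact hg y hy
  have hcY := hc₁.smul_add hc₂ hd₁ hd₂ (-g p₀)
  refine ⟨-g p₀, 1, by simp, fun q => ?_⟩
  rw [one_smul]
  refine hcY.eq_zero_of_eventually hE (by fun_prop) (p := p₀) ?_ q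
  filter_upwards [Metric.ball_mem_nhds p₀ hr] with x hx
  rw [hg x (hball x hx), hconst x hx]
  simp

end

/-- Two smooth conformal vector fields (with respect to the Euclidean metric) on `ℝⁿ`,
`n ≥ 2`, which are pointwise linearly dependent at every point, are linearly dependent
over `ℝ` as vector fields. -/
theorem euclidean_conformal_pointwise_dependent (n : ℕ) (hn : 2 ≤ n)
    (X₁ X₂ : EuclideanSpace ℝ (Fin n) → EuclideanSpace ℝ (Fin n))
    (hX₁ : ContDiff ℝ (⊤ : ℕ∞) X₁) (hX₂ : ContDiff ℝ (⊤ : ℕ∞) X₂)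
    (hc₁ : ∃ f : EuclideanSpace ℝ (Fin n) → ℝ, ContDiff ℝ (⊤ : ℕ∞) f ∧
      ∀ (p v w : EuclideanSpace ℝ (Fin n)),
        ⟪fderiv ℝ X₁ p v, w⟫ + ⟪v, fderiv ℝ X₁ p w⟫ = f p * ⟪v, w⟫)
    (hc₂ : ∃ f : EuclideanSpace ℝ (Fin n) → ℝ, ContDiff ℝ (⊤ : ℕ∞) f ∧
      ∀ (p v w : EuclideanSpace ℝ (Fin n)),
        ⟪fderiv ℝ X₂ p v, w⟫ + ⟪v, fderiv ℝ X₂ p w⟫ = f p * ⟪v, w⟫)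
    (hdep : ∀ p : EuclideanSpace ℝ (Fin n),
      ∃ a b : ℝ, (a, b) ≠ (0, 0) ∧ a • X₁ p + b • X₂ p = 0) :
    ∃ l₁ l₂ : ℝ, (l₁, l₂) ≠ (0, 0) ∧ ∀ p, l₁ • X₁ p + l₂ • X₂ p = 0 := by
  have hE : 2 ≤ Module.finrank ℝ (EuclideanSpace ℝ (Fin n)) := by simpa using hn
  obtain ⟨f₁, -, hc₁⟩ := hc₁
  obtain ⟨f₂, -, hc₂⟩ := hc₂
  have hd₁ : Differentiable ℝ X₁ := hX₁.differentiable (by simp)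
  have hd₂ : Differentiable ℝ X₂ := hX₂.differentiable (by simp)
  exact IsConformalField.exists_smul_add_smul_eq_zero hE hc₁ hc₂ hd₁ hd₂ hdep
end

section
/- Let U ⊆ ℝ² be open, let g be a smooth pseudo-Riemannian metric on U (a smooth assignment p ↦ g_p of nondegenerate symmetric bilinear forms on ℝ²), and let Y : U → ℝ² be a smooth vector field that is conformal with respect to g, i.e. (L_Y g) = f_Y·g for some smooth f_Y : U → ℝ. Let W, W⊥ : U → ℝ² be smooth vector fields with W nowhere vanishing such that: g_p(W(p), W⊥(p)) = 0 for all p ∈ U, and the one-dimensional distribution spanned by W is invariant under Y, i.e. [Y,W](p) ∈ ℝ·W(p) for all p ∈ U. Then g_p(W(p), [Y,W⊥](p)) = 0 for all p ∈ U; that is, the Lie bracket [Y,W⊥] takes values in the g-orthogonal distribution of W. -/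
/-! Differentiating `g(W, W⊥) = 0` along `Y` gives the Leibniz rule
`(L_Y g)(W, W⊥) + g([Y, W], W⊥) + g(W, [Y, W⊥]) = 0`. The first term is `f_Y g(W, W⊥) = 0` by
conformality, and the second vanishes because `[Y, W]` is a multiple of `W`. -/

/-- The Lie bracket of vector fields on the plane, identified with smooth maps
`ℝ² → ℝ²`: `[Y,X](p) = (DX)_p(Y(p)) - (DY)_p(X(p))`. -/
noncomputable def lieBr2 (Y X : ℝ × ℝ → ℝ × ℝ) : ℝ × ℝ → ℝ × ℝ :=
  fun p => fderiv ℝ X p (Y p) - fderiv ℝ Y p (X p)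

/-- Let `g` be a smooth pseudo-Riemannian metric on an open set `U ⊆ ℝ²` and `Y` a smooth
conformal vector field for `g`.  If the line distribution spanned by a smooth nowhere
vanishing vector field `W` is `Y`-invariant and `W⊥` is a smooth vector field
`g`-orthogonal to `W`, then `[Y, W⊥]` takes values in the `g`-orthogonal distribution
of `W`. -/
theorem conformal_invariant_orthogonal_distribution
    (U : Set (ℝ × ℝ)) (hU : IsOpen U)
    (g : ℝ × ℝ → (ℝ × ℝ) →L[ℝ] (ℝ × ℝ) →L[ℝ] ℝ)
    (hg : ContDiffOn ℝ (⊤ : ℕ∞) g U)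
    (hsym : ∀ p ∈ U, ∀ v w : ℝ × ℝ, g p v w = g p w v)
    (hnd : ∀ p ∈ U, ∀ v : ℝ × ℝ, (∀ w : ℝ × ℝ, g p v w = 0) → v = 0)
    (Y : ℝ × ℝ → ℝ × ℝ) (hY : ContDiffOn ℝ (⊤ : ℕ∞) Y U)
    (fY : ℝ × ℝ → ℝ) (hfY : ContDiffOn ℝ (⊤ : ℕ∞) fY U)
    (hconf : ∀ p ∈ U, ∀ v w : ℝ × ℝ,
      fderiv ℝ g p (Y p) v w + g p (fderiv ℝ Y p v) w + g p v (fderiv ℝ Y p w)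
        = fY p * g p v w)
    (W Wperp : ℝ × ℝ → ℝ × ℝ)
    (hW : ContDiffOn ℝ (⊤ : ℕ∞) W U) (hWperp : ContDiffOn ℝ (⊤ : ℕ∞) Wperp U)
    (hWne : ∀ p ∈ U, W p ≠ 0)
    (horth : ∀ p ∈ U, g p (W p) (Wperp p) = 0)
    (hinv : ∀ p ∈ U, ∃ l : ℝ, lieBr2 Y W p = l • W p) :
    ∀ p ∈ U, g p (W p) (lieBr2 Y Wperp p) = 0 := by
  intro p hp
  have diff {F : Type} [NormedAddCommGroup F] [NormedSpace ℝ F] {h : ℝ × ℝ → F}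
      (hh : ContDiffOn ℝ (⊤ : ℕ∞) h U) : HasFDerivAt h (fderiv ℝ h p) p :=
    ((hh.contDiffAt (hU.mem_nhds hp)).differentiableAt (by simp)).hasFDerivAt
  have hD := ((diff hg).clm_apply (diff hW)).clm_apply (diff hWperp)
  have hzero : (fun q => g q (W q) (Wperp q)) =ᶠ[nhds p] fun _ => 0 :=
    Filter.eventuallyEq_of_mem (hU.mem_nhds hp) horth
  have hder := congrArg (fun L : ℝ × ℝ →L[ℝ] ℝ => L (Y p))
    (hD.unique ((hasFDerivAt_const (0 : ℝ) p).congr_of_eventuallyEq hzero))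
  simp at hder
  have hc := hconf p hp (W p) (Wperp p)
  obtain ⟨l, hl⟩ := hinv p hp
  have hWbr := congrArg (fun v => g p v (Wperp p)) hl
  simp only [lieBr2, map_sub, map_smul, sub_apply, smul_apply, smul_eq_mul,
    horth p hp, mul_zero] at hWbr hc ⊢
  linarith
end

section
/- Let U ⊆ ℝ² be open, let g be a smooth pseudo-Riemannian metric on U of signature (1,1) (a hyperbolic metric), and let Y : U → ℝ² be a smooth vector field conformal with respect to g, i.e. L_Y g = f_Y·g for some smooth f_Y. If X : U → ℝ² is a smooth nowhere-vanishing null vector field, i.e. g_p(X(p), X(p)) = 0 for all p ∈ U, then the line distribution spanned by X is invariant under Y: for every p ∈ U, the bracket [Y,X](p) lies in the one-dimensional subspace ℝ·X(p) of ℝ². -/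
/-!
Differentiating `g(X, X) = 0` along `Y` gives `(D_Y g)(X, X) + 2 g(D_Y X, X) = 0`, while the
conformal equation evaluated on `(X, X)` gives `(D_Y g)(X, X) + 2 g(D_X Y, X) = 0`, its right-hand
side vanishing because `X` is null. Subtracting, `g(X, [Y, X]) = 0`, so `[Y, X]` lies in the
orthogonal complement of the nonzero null vector `X`. By nondegeneracy in dimension two this
complement is the line spanned by `X` (`exists_smul_of_null_of_orthogonal`).
-/

/-- For nondegenerate `B` and null `x ≠ 0`, the kernel of `B x` is the line `ℝ x`: in dimension two
a vector of the kernel independent of `x` would make `B x` vanish on a basis. -/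
theorem exists_smul_of_null_of_orthogonal
    (B : (ℝ × ℝ) →L[ℝ] (ℝ × ℝ) →L[ℝ] ℝ)
    (hnd : ∀ v : ℝ × ℝ, (∀ w : ℝ × ℝ, B v w = 0) → v = 0)
    (x w : ℝ × ℝ) (hx : x ≠ 0) (hxx : B x x = 0) (hxw : B x w = 0) :
    ∃ l : ℝ, w = l • x := by
  have hexp : ∀ v : ℝ × ℝ, B x v = v.1 * B x (1, 0) + v.2 * B x (0, 1) := by
    intro v
    have hv : v = v.1 • ((1, 0) : ℝ × ℝ) + v.2 • ((0, 1) : ℝ × ℝ) := by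
      ext <;> simp
    conv_lhs => rw [hv]
    simp only [map_add, map_smul, smul_eq_mul]
  have h1 := hexp x
  have h2 := hexp w
  rw [hxx] at h1
  rw [hxw] at h2
  have hdet : x.1 * w.2 - x.2 * w.1 = 0 := by
    by_contra hne
    -- Cramer's rule: both coefficients of `B x` vanish.
    have hα : B x (1, 0) = 0 := by
      refine (mul_eq_zero.mp ?_).resolve_left hne
      linear_combination x.2 * h2 - w.2 * h1
    have hβ : B x (0, 1) = 0 := by
      refine (mul_eq_zero.mp ?_).resolve_left hne
      linear_combination w.1 * h1 - x.1 * h2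
    exact hx (hnd x fun v => by rw [hexp, hα, hβ]; ring)
  have hpos : x.1 ^ 2 + x.2 ^ 2 ≠ 0 := by
    intro h
    apply hx
    ext
    · show x.1 = 0
      nlinarith [sq_nonneg x.1, sq_nonneg x.2]
    · show x.2 = 0
      nlinarith [sq_nonneg x.1, sq_nonneg x.2]
  -- The coefficient of the Euclidean projection of `w` onto `x`.
  refine ⟨(x.1 * w.1 + x.2 * w.2) / (x.1 ^ 2 + x.2 ^ 2), ?_⟩
  ext
  · simp only [Prod.smul_fst, smul_eq_mul]
    rw [div_mul_eq_mul_div, eq_div_iff hpos]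
    linear_combination -x.2 * hdet
  · simp only [Prod.smul_snd, smul_eq_mul]
    rw [div_mul_eq_mul_div, eq_div_iff hpos]
    linear_combination x.1 * hdet


/-- Let `g` be a smooth hyperbolic (signature `(1,1)`) metric on an open set `U ⊆ ℝ²` and
`Y` a smooth conformal vector field for `g`.  Then the line distribution spanned by any
smooth nowhere-vanishing null vector field `X` is invariant under `Y`: for every `p ∈ U`,
`[Y,X](p)` lies in `ℝ·X(p)`. -/
theorem hyperbolic_conformal_null_line_invariant
    (U : Set (ℝ × ℝ)) (hU : IsOpen U)
    (g : ℝ × ℝ → (ℝ × ℝ) →L[ℝ] (ℝ × ℝ) →L[ℝ] ℝ)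
    (hg : ContDiffOn ℝ (⊤ : ℕ∞) g U)
    (hsym : ∀ p ∈ U, ∀ v w : ℝ × ℝ, g p v w = g p w v)
    (hnd : ∀ p ∈ U, ∀ v : ℝ × ℝ, (∀ w : ℝ × ℝ, g p v w = 0) → v = 0)
    (hsig : ∀ p ∈ U, (∃ v : ℝ × ℝ, 0 < g p v v) ∧ (∃ w : ℝ × ℝ, g p w w < 0))
    (Y : ℝ × ℝ → ℝ × ℝ) (hY : ContDiffOn ℝ (⊤ : ℕ∞) Y U)
    (fY : ℝ × ℝ → ℝ) (hfY : ContDiffOn ℝ (⊤ : ℕ∞) fY U)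
    (hconf : ∀ p ∈ U, ∀ v w : ℝ × ℝ,
      fderiv ℝ g p (Y p) v w + g p (fderiv ℝ Y p v) w + g p v (fderiv ℝ Y p w)
        = fY p * g p v w)
    (X : ℝ × ℝ → ℝ × ℝ) (hX : ContDiffOn ℝ (⊤ : ℕ∞) X U)
    (hXne : ∀ p ∈ U, X p ≠ 0)
    (hnull : ∀ p ∈ U, g p (X p) (X p) = 0) :
    ∀ p ∈ U, ∃ l : ℝ, lieBr2 Y X p = l • X p := by
  intro p hp
  have hUp : U ∈ nhds p := hU.mem_nhds hp
  have hgd : DifferentiableAt ℝ g p := (hg.contDiffAt hUp).differentiableAt (by simp)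
  have hXd : DifferentiableAt ℝ X p := (hX.contDiffAt hUp).differentiableAt (by simp)
  have hder := (hgd.hasFDerivAt.clm_apply hXd.hasFDerivAt).clm_apply hXd.hasFDerivAt
  have hzero : (fun q => g q (X q) (X q)) =ᶠ[nhds p] fun _ => (0 : ℝ) := by
    filter_upwards [hUp] with q hq using hnull q hq
  have hD := hder.unique ((hasFDerivAt_const (0 : ℝ) p).congr_of_eventuallyEq hzero)
  have hDY := congrArg (fun L => L (Y p)) hD
  simp at hDY
  have hc := hconf p hp (X p) (X p)
  rw [hnull p hp, mul_zero, hsym p hp (fderiv ℝ Y p (X p)) (X p)] at hc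
  rw [hsym p hp (fderiv ℝ X p (Y p)) (X p)] at hDY
  apply exists_smul_of_null_of_orthogonal (g p) (hnd p hp) _ _ (hXne p hp) (hnull p hp)
  simp only [lieBr2, map_sub]
  linarith
end

section
/- Let c ∈ ℝ with c ≠ 0, let (c₀, c₁, c₂) ∈ ℝ³ with (c₀, c₁, c₂) ≠ (0,0,0), and let c̄₀, c̄₁, c̄₂ ∈ ℝ be arbitrary. Define the polynomial vector fields on ℝ² (coordinates (ξ₁, ξ₂)): Γ₀ := (ξ₂ − c·ξ₁²)·∂/∂ξ₁ + (c̄₀ + c̄₁ξ₁ + c̄₂ξ₂ − c·ξ₁ξ₂)·∂/∂ξ₂ and Γ₁ := (c₀ + c₁ξ₁ + c₂ξ₂)·∂/∂ξ₂. Then for every nonempty open set U ⊆ ℝ² there is NO smooth nowhere-vanishing function f : U → ℝ such that both div(f·Γ₀) = 0 and div(f·Γ₁) = 0 on U, where div(f·Γ) := ∂(f·Γ¹)/∂ξ₁ + ∂(f·Γ²)/∂ξ₂. Equivalently, the two-form Ω = f·dξ₁∧dξ₂ is never simultaneously invariant under Γ₀ and Γ₁ (L_{Γ₀}Ω = L_{Γ₁}Ω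 = 0 is impossible), so strictly non-autonomous second-order Riccati chain equations admit no Vessiot–Guldberg Lie algebra of locally Hamiltonian vector fields relative to a symplectic structure. -/
/-!
Write `x, y` for the coordinates, `A = y - c x²`, `B` for the second component of `Γ₀`,
`L = c₀ + c₁ x + c₂ y`, and `D = c̄₂ - 3 c x = div Γ₀`. The two divergence conditions read
`A f_x + B f_y + D f = 0` and `L f_y + c₂ f = 0`; eliminating `f_y` gives
`A L f_x = (c₂ B - D L) f`. Differentiating this equation in `y` and
`L f_y + c₂ f = 0` in `x`, and using `f_xy = f_yx`, all derivatives of `f` can be eliminated, and since `f ≠ 0` what is left is the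
vanishing on `U` of the polynomial
`P = L (c₂ B - D L) + c₁ c₂ A² - 2 c c₂ x A L + c₂ A (c₂ B - D L)`
(`riccati_compat`). Hence `P` vanishes identically (`riccati_poly_zero`).
If `c₂ ≠ 0`, on the parabola `A = 0` it reduces to a quintic in `x` with leading
coefficient `2 c³ c₂²`, which is nonzero; if `c₂ = 0`, then `P = (3 c x - c̄₂) L²`, which
forces `L = 0`. Both cases contradict the hypotheses (`riccati_poly_ne_zero`).
-/

/-- The polynomial `P` obtained by eliminating `f` from the two divergence equations. -/
def riccatiPoly (c c0 c1 c2 cb0 cb1 cb2 x y : ℝ) : ℝ :=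
  (c0 + c1 * x + c2 * y) *
      (c2 * (cb0 + cb1 * x + cb2 * y - c * x * y) - (cb2 - 3 * c * x) * (c0 + c1 * x + c2 * y))
    + c1 * c2 * (y - c * x ^ 2) ^ 2
    - 2 * c * c2 * x * (y - c * x ^ 2) * (c0 + c1 * x + c2 * y)
    + c2 * (y - c * x ^ 2) *
      (c2 * (cb0 + cb1 * x + cb2 * y - c * x * y) - (cb2 - 3 * c * x) * (c0 + c1 * x + c2 * y))

theorem riccati_poly_ne_zero (c : ℝ) (hc : c ≠ 0) (c0 c1 c2 : ℝ)
    (hΓ1 : (c0, c1, c2) ≠ (0, 0, 0)) (cb0 cb1 cb2 : ℝ)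
    (h : ∀ x y, riccatiPoly c c0 c1 c2 cb0 cb1 cb2 x y = 0) : False := by
  unfold riccatiPoly at h
  by_cases h2 : c2 = 0
  · subst h2
    -- The third finite difference in `x` isolates the cubic coefficient `3 c c₁²`.
    have e1 : c * c1 ^ 2 = 0 := by
      linear_combination (1 / 18) * (h 3 0 - 3 * h 2 0 + 3 * h 1 0 - h 0 0)
    have h1 : c1 = 0 := by simpa [hc] using e1
    subst h1
    have e0 : c * c0 ^ 2 = 0 := by
      linear_combination (1 / 3) * (h 1 0 - h 0 0)
    have h0 : c0 = 0 := by simpa [hc] using e0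
    exact hΓ1 (by rw [h0])
  · -- The fifth finite difference along `y = c x²` isolates the leading coefficient `2 c³ c₂²`.
    have e : c ^ 3 * c2 ^ 2 = 0 := by
      linear_combination (1 / 240) * (h 5 (c * 5 ^ 2) - 5 * h 4 (c * 4 ^ 2) + 10 * h 3 (c * 3 ^ 2)
        - 10 * h 2 (c * 2 ^ 2) + 5 * h 1 (c * 1 ^ 2) - h 0 (c * 0 ^ 2))
    simp [hc, h2] at e

theorem riccati_poly_zero (c c0 c1 c2 cb0 cb1 cb2 : ℝ) (U : Set (ℝ × ℝ)) (hU : IsOpen U)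
    (hne : U.Nonempty) (h : ∀ p ∈ U, riccatiPoly c c0 c1 c2 cb0 cb1 cb2 p.1 p.2 = 0) :
    ∀ x y, riccatiPoly c c0 c1 c2 cb0 cb1 cb2 x y = 0 := by
  obtain ⟨p, hp⟩ := hne
  have ha : AnalyticOnNhd ℝ
      (fun q : ℝ × ℝ => riccatiPoly c c0 c1 c2 cb0 cb1 cb2 q.1 q.2) Set.univ := by
    intro q _
    have h1 : AnalyticAt ℝ (fun q : ℝ × ℝ => q.1) q := analyticAt_fst
    have h2 : AnalyticAt ℝ (fun q : ℝ × ℝ => q.2) q := analyticAt_snd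
    unfold riccatiPoly
    fun_prop
  have hz : AnalyticOnNhd ℝ (fun _ : ℝ × ℝ => (0 : ℝ)) Set.univ := fun _ _ => analyticAt_const
  have := ha.eq_of_eventuallyEq hz (z₀ := p)
    (Filter.eventually_of_mem (hU.mem_nhds hp) h)
  intro x y
  exact congrFun this (x, y)

theorem hasDerivAt_slice_fst {g : ℝ × ℝ → ℝ} {g' : ℝ × ℝ →L[ℝ] ℝ} {x y : ℝ}
    (h : HasFDerivAt g g' (x, y)) : HasDerivAt (fun t => g (t, y)) (g' (1, 0)) x :=
  h.comp_hasDerivAt x ((hasDerivAt_id x).prodMk (hasDerivAt_const x y))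

theorem hasDerivAt_slice_snd {g : ℝ × ℝ → ℝ} {g' : ℝ × ℝ →L[ℝ] ℝ} {x y : ℝ}
    (h : HasFDerivAt g g' (x, y)) : HasDerivAt (fun t => g (x, t)) (g' (0, 1)) y :=
  h.comp_hasDerivAt y ((hasDerivAt_const y x).prodMk (hasDerivAt_id y))

/-- The integrability condition `f_xy = f_yx` for the two divergence equations, written without
derivatives of `f`. -/
theorem riccati_compat (c c0 c1 c2 cb0 cb1 cb2 : ℝ) (U : Set (ℝ × ℝ)) (hU : IsOpen U)
    (f : ℝ × ℝ → ℝ) (hf : ContDiffOn ℝ (⊤ : ℕ∞) f U) (hf0 : ∀ p ∈ U, f p ≠ 0)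
    (E0 : ∀ p ∈ U, (p.2 - c * p.1 ^ 2) * fderiv ℝ f p (1, 0)
      + (cb0 + cb1 * p.1 + cb2 * p.2 - c * p.1 * p.2) * fderiv ℝ f p (0, 1)
      + (cb2 - 3 * c * p.1) * f p = 0)
    (E1 : ∀ p ∈ U, (c0 + c1 * p.1 + c2 * p.2) * fderiv ℝ f p (0, 1) + c2 * f p = 0) :
    ∀ p ∈ U, riccatiPoly c c0 c1 c2 cb0 cb1 cb2 p.1 p.2 = 0 := by
  rintro ⟨x, y⟩ hp
  have hfp : ContDiffAt ℝ 2 f (x, y) := (hf.contDiffAt (hU.mem_nhds hp)).of_le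
    (WithTop.coe_le_coe.2 (le_top : (2 : ℕ∞) ≤ ⊤))
  have hd : HasFDerivAt f (fderiv ℝ f (x, y)) (x, y) :=
    (hfp.differentiableAt (by simp)).hasFDerivAt
  have hd2 : HasFDerivAt (fderiv ℝ f) (fderiv ℝ (fderiv ℝ f) (x, y)) (x, y) :=
    ((hfp.fderiv_right (m := 1) (by norm_num)).differentiableAt
      (by simp)).hasFDerivAt
  have hsymm : fderiv ℝ (fderiv ℝ f) (x, y) (1, 0) (0, 1)
      = fderiv ℝ (fderiv ℝ f) (x, y) (0, 1) (1, 0) :=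
    (hfp.isSymmSndFDerivAt (by simp)).eq _ _
  have hx2 (v : ℝ × ℝ) := hd2.clm_apply (hasFDerivAt_const v (x, y))
  -- Differentiate `L f_y + c₂ f = 0` in `x`.
  have K1 : (c0 + c1 * x + c2 * y) * fderiv ℝ (fderiv ℝ f) (x, y) (1, 0) (0, 1)
      + c1 * fderiv ℝ f (x, y) (0, 1) + c2 * fderiv ℝ f (x, y) (1, 0) = 0 := by
    have hev : (fun t => (c0 + c1 * t + c2 * y) * fderiv ℝ f (t, y) (0, 1) + c2 * f (t, y))
        =ᶠ[nhds x] fun _ => 0 := by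
      have : ∀ᶠ t in nhds x, (t, y) ∈ U :=
        (Continuous.continuousAt (by fun_prop : Continuous fun t : ℝ => (t, y))).eventually_mem
          (hU.mem_nhds hp)
      filter_upwards [this] with t ht using E1 (t, y) ht
    have h1 := ((((((hasDerivAt_id x).const_mul c1).const_add c0).add_const (c2 * y)).mul
      (hasDerivAt_slice_fst (hx2 (0, 1)))).add ((hasDerivAt_slice_fst hd).const_mul c2))
    have h2 := h1.unique ((hasDerivAt_const x (0 : ℝ)).congr_of_eventuallyEq hev)
    simp at h2
    linear_combination h2
  -- Differentiate `A L f_x = (c₂ B - D L) f` in `y`.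
  have K0 : (y - c * x ^ 2) * (c0 + c1 * x + c2 * y)
        * fderiv ℝ (fderiv ℝ f) (x, y) (0, 1) (1, 0)
      + ((c0 + c1 * x + c2 * y) + c2 * (y - c * x ^ 2)) * fderiv ℝ f (x, y) (1, 0)
      - 2 * c * c2 * x * f (x, y)
      - (c2 * (cb0 + cb1 * x + cb2 * y - c * x * y)
        - (cb2 - 3 * c * x) * (c0 + c1 * x + c2 * y)) * fderiv ℝ f (x, y) (0, 1) = 0 := by
    have hev : (fun t => ((t - c * x ^ 2) * (c0 + c1 * x + c2 * t)) * fderiv ℝ f (x, t) (1, 0)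
        - (c2 * (cb0 + cb1 * x + cb2 * t - c * x * t)
          - (cb2 - 3 * c * x) * (c0 + c1 * x + c2 * t)) * f (x, t))
        =ᶠ[nhds y] fun _ => 0 := by
      have : ∀ᶠ t in nhds y, (x, t) ∈ U :=
        (Continuous.continuousAt (by fun_prop : Continuous fun t : ℝ => (x, t))).eventually_mem
          (hU.mem_nhds hp)
      filter_upwards [this] with t ht
      have a0 := E0 (x, t) ht
      have a1 := E1 (x, t) ht
      simp only at a0 a1
      linear_combination (c0 + c1 * x + c2 * t) * a0
        - (cb0 + cb1 * x + cb2 * t - c * x * t) * a1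
    have hL := ((hasDerivAt_id y).const_mul c2).const_add (c0 + c1 * x)
    have hA := (hasDerivAt_id y).sub_const (c * x ^ 2)
    have hB := (((hasDerivAt_id y).const_mul cb2).const_add (cb0 + cb1 * x)).sub
      ((hasDerivAt_id y).const_mul (c * x))
    have h1 := ((hA.mul hL).mul (hasDerivAt_slice_snd (hx2 (1, 0)))).sub
      (((hB.const_mul c2).sub (hL.const_mul (cb2 - 3 * c * x))).mul (hasDerivAt_slice_snd hd))
    have h2 := h1.unique ((hasDerivAt_const y (0 : ℝ)).congr_of_eventuallyEq hev)
    simp at h2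
    linear_combination h2
  have a0 := E0 (x, y) hp
  have a1 := E1 (x, y) hp
  simp only at a0 a1
  rw [hsymm] at K1
  generalize fderiv ℝ (fderiv ℝ f) (x, y) (0, 1) (1, 0) = s at *
  generalize fderiv ℝ f (x, y) (1, 0) = u at *
  generalize fderiv ℝ f (x, y) (0, 1) = v at *
  -- `K` is free of second derivatives and `M` is the equation `A L f_x = (c₂ B - D L) f`.
  have K : (c0 + c1 * x + c2 * y) * u - c1 * (y - c * x ^ 2) * v - 2 * c * c2 * x * f (x, y)
      - (c2 * (cb0 + cb1 * x + cb2 * y - c * x * y)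
        - (cb2 - 3 * c * x) * (c0 + c1 * x + c2 * y)) * v = 0 := by
    linear_combination K0 - (y - c * x ^ 2) * K1
  have M : (y - c * x ^ 2) * (c0 + c1 * x + c2 * y) * u
      - (c2 * (cb0 + cb1 * x + cb2 * y - c * x * y)
        - (cb2 - 3 * c * x) * (c0 + c1 * x + c2 * y)) * f (x, y) = 0 := by
    linear_combination (c0 + c1 * x + c2 * y) * a0
        - (cb0 + cb1 * x + cb2 * y - c * x * y) * a1
  have key : riccatiPoly c c0 c1 c2 cb0 cb1 cb2 x y * f (x, y) = 0 := by
    unfold riccatiPoly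
    linear_combination (y - c * x ^ 2) * (c0 + c1 * x + c2 * y) * K
      - (c0 + c1 * x + c2 * y) * M
      + (y - c * x ^ 2) * (c1 * (y - c * x ^ 2)
        + (c2 * (cb0 + cb1 * x + cb2 * y - c * x * y)
        - (cb2 - 3 * c * x) * (c0 + c1 * x + c2 * y))) * a1
  exact (mul_eq_zero.mp key).resolve_right (hf0 _ hp)


/-- Strictly non-autonomous second-order Riccati chain equations (`c ≠ 0`,
`(c₀,c₁,c₂) ≠ (0,0,0)`) admit no Vessiot–Guldberg Lie algebra of locally Hamiltonian
vector fields relative to a symplectic structure: on no nonempty open set `U ⊆ ℝ²` is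
there a smooth nowhere-vanishing `f` with `div(f·Γ₀) = 0` and `div(f·Γ₁) = 0`, where
`Γ₀ = (ξ₂ - cξ₁²)∂₁ + (c̄₀ + c̄₁ξ₁ + c̄₂ξ₂ - cξ₁ξ₂)∂₂` and
`Γ₁ = (c₀ + c₁ξ₁ + c₂ξ₂)∂₂`. -/
theorem second_order_riccati_chain_not_hamiltonian
    (c : ℝ) (hc : c ≠ 0) (c0 c1 c2 : ℝ) (hΓ1 : (c0, c1, c2) ≠ (0, 0, 0))
    (cb0 cb1 cb2 : ℝ) :
    ∀ U : Set (ℝ × ℝ), IsOpen U → U.Nonempty →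
      ¬ ∃ f : ℝ × ℝ → ℝ, ContDiffOn ℝ (⊤ : ℕ∞) f U ∧ (∀ p ∈ U, f p ≠ 0) ∧
        (∀ p ∈ U,
          fderiv ℝ (fun q : ℝ × ℝ => f q * (q.2 - c * q.1 ^ 2)) p ((1 : ℝ), (0 : ℝ))
            + fderiv ℝ (fun q : ℝ × ℝ =>
                f q * (cb0 + cb1 * q.1 + cb2 * q.2 - c * q.1 * q.2)) p ((0 : ℝ), (1 : ℝ))
            = 0) ∧
        (∀ p ∈ U,
          fderiv ℝ (fun q : ℝ × ℝ => f q * (0 : ℝ)) p ((1 : ℝ), (0 : ℝ))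
            + fderiv ℝ (fun q : ℝ × ℝ =>
                f q * (c0 + c1 * q.1 + c2 * q.2)) p ((0 : ℝ), (1 : ℝ))
            = 0) := by
  rintro U hU hne ⟨f, hf, hf0, h0, h1⟩
  have hd : ∀ p ∈ U, HasFDerivAt f (fderiv ℝ f p) p := fun p hp =>
    ((hf.contDiffAt (hU.mem_nhds hp)).differentiableAt (by simp)).hasFDerivAt
  refine riccati_poly_ne_zero c hc c0 c1 c2 hΓ1 cb0 cb1 cb2
    (riccati_poly_zero c c0 c1 c2 cb0 cb1 cb2 U hU hne
      (riccati_compat c c0 c1 c2 cb0 cb1 cb2 U hU f hf hf0 ?_ ?_))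
  · intro p hp
    have e := h0 p hp
    have hx : HasFDerivAt Prod.fst (ContinuousLinearMap.fst ℝ ℝ ℝ) p := hasFDerivAt_fst
    have hy : HasFDerivAt Prod.snd (ContinuousLinearMap.snd ℝ ℝ ℝ) p := hasFDerivAt_snd
    have ha : HasFDerivAt (fun q : ℝ × ℝ => q.2 - c * q.1 ^ 2) _ p :=
      hy.sub ((hx.pow 2).const_mul c)
    have hb : HasFDerivAt (fun q : ℝ × ℝ => cb0 + cb1 * q.1 + cb2 * q.2 - c * q.1 * q.2) _ p :=
      (((hx.const_mul cb1).const_add cb0).add (hy.const_mul cb2)).sub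
        ((hx.const_mul c).mul hy)
    rw [((hd p hp).fun_mul ha).fderiv, ((hd p hp).fun_mul hb).fderiv] at e
    simp at e
    linear_combination e
  · intro p hp
    have e := h1 p hp
    have hx : HasFDerivAt Prod.fst (ContinuousLinearMap.fst ℝ ℝ ℝ) p := hasFDerivAt_fst
    have hy : HasFDerivAt Prod.snd (ContinuousLinearMap.snd ℝ ℝ ℝ) p := hasFDerivAt_snd
    have hb : HasFDerivAt (fun q : ℝ × ℝ => c0 + c1 * q.1 + c2 * q.2) _ p :=
      ((hx.const_mul c1).const_add c0).add (hy.const_mul c2)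
    rw [((hd p hp).fun_mul hb).fderiv] at e
    simp at e
    linear_combination e
end

section
/- Let (c₀, c₁, c₂) ∈ ℝ³ with (c₀, c₁, c₂) ≠ (0,0,0) and c̄₀, c̄₁, c̄₂ ∈ ℝ. Define the polynomial vector fields on ℝ² (coordinates (ξ₁, ξ₂)): Γ₀ := ξ₂·∂/∂ξ₁ + (c̄₀ + c̄₁ξ₁ + c̄₂ξ₂)·∂/∂ξ₂ and Γ₁ := (c₀ + c₁ξ₁ + c₂ξ₂)·∂/∂ξ₂ (the affine case c = 0). Then there exist a nonempty open set U ⊆ ℝ² and a smooth nowhere-vanishing function f : U → ℝ with div(f·Γ₀) = 0 and div(f·Γ₁) = 0 on U if and only if one of the following holds: (a) c₂ = c̄₂ = 0, or (b) c₁ = c̄₁ = 0 and c₂c̄₀ − c₀c̄₂ = 0. -/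
/-!
Write `L = c₀ + c₁ξ₁ + c₂ξ₂` and `M = (c₂c̄₀ - c₀c̄₂) + (c₂c̄₁ - c₁c̄₂)ξ₁`. The two divergence
equations are equivalent to `L ∂₂f = -c₂ f` together with `ξ₂ ∂₁f = -(c̄₀ + c̄₁ξ₁ + c̄₂ξ₂) ∂₂f - c̄₂ f`,
and they imply `ξ₂ L ∂₁f = M f`. Differentiating the first equation along `ξ₁`, the last one along
`ξ₂`, and eliminating the mixed second derivative (equality of mixed partials) gives
`L ∂₁f = (M + c₁ξ₂) ∂₂f`. Multiplying by `ξ₂ L` and dividing by the nonvanishing `f` leaves the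
polynomial identity `M (L + c₂ξ₂) + c₁c₂ξ₂² = 0` on an open set (`compatibility`). All coefficients
of this quadratic polynomial therefore vanish (`quadratic_coeffs_eq_zero`); as `(c₀, c₁, c₂) ≠ 0`, this forces (a)
or (b).

Conversely, in case (a) both fields are divergence free, so `f = 1` works. In case (b)
`L = c₀ + c₂ξ₂` and `c̄₀ + c̄₂ξ₂` are proportional functions of `ξ₂` alone, and `f = 1 / L` works
where `L ≠ 0`.
-/

lemma hasFDerivAt_affine (k0 k1 k2 : ℝ) (p : ℝ × ℝ) :
    HasFDerivAt (fun q : ℝ × ℝ => k0 + k1 * q.1 + k2 * q.2)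
      (k1 • ContinuousLinearMap.fst ℝ ℝ ℝ + k2 • ContinuousLinearMap.snd ℝ ℝ ℝ) p := by
  have h1 : HasFDerivAt (fun q : ℝ × ℝ => q.1) (ContinuousLinearMap.fst ℝ ℝ ℝ) p :=
    hasFDerivAt_fst
  have h2 : HasFDerivAt (fun q : ℝ × ℝ => q.2) (ContinuousLinearMap.snd ℝ ℝ ℝ) p :=
    hasFDerivAt_snd
  exact ((h1.const_mul k1).const_add k0).add (h2.const_mul k2)

/-- The Leibniz rule for `∂₂(f · k)` with `k` affine. -/
lemma fderiv_mul_affine_snd {f : ℝ × ℝ → ℝ} {p : ℝ × ℝ} (hf : DifferentiableAt ℝ f p)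
    (k0 k1 k2 : ℝ) :
    fderiv ℝ (fun q : ℝ × ℝ => f q * (k0 + k1 * q.1 + k2 * q.2)) p ((0 : ℝ), (1 : ℝ))
      = (k0 + k1 * p.1 + k2 * p.2) * fderiv ℝ f p (0, 1) + k2 * f p := by
  rw [(hf.hasFDerivAt.fun_mul (hasFDerivAt_affine k0 k1 k2 p)).fderiv]
  simp
  ring

/-- The Leibniz rule for `∂₁(f · ξ₂)`. -/
lemma fderiv_mul_snd_fst {f : ℝ × ℝ → ℝ} {p : ℝ × ℝ} (hf : DifferentiableAt ℝ f p) :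
    fderiv ℝ (fun q : ℝ × ℝ => f q * q.2) p ((1 : ℝ), (0 : ℝ))
      = p.2 * fderiv ℝ f p (1, 0) := by
  have h2 : HasFDerivAt (fun q : ℝ × ℝ => q.2) (ContinuousLinearMap.snd ℝ ℝ ℝ) p :=
    hasFDerivAt_snd
  rw [(hf.hasFDerivAt.fun_mul h2).fderiv]
  simp

/-- A quadratic polynomial in two variables vanishing on a nonempty open set is zero. -/
lemma quadratic_coeffs_eq_zero {U : Set (ℝ × ℝ)} (hU : IsOpen U) (hne : U.Nonempty)
    (a b c d e g : ℝ)
    (h : ∀ p ∈ U, a + b * p.1 + c * p.2 + d * p.1 ^ 2 + e * (p.1 * p.2) + g * p.2 ^ 2 = 0) :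
    a = 0 ∧ b = 0 ∧ c = 0 ∧ d = 0 ∧ e = 0 ∧ g = 0 := by
  obtain ⟨⟨u, v⟩, hp⟩ := hne
  obtain ⟨r, hr, hball⟩ := Metric.isOpen_iff.1 hU _ hp
  -- The polynomial vanishes on a small grid; finite differences on this grid
  -- recover the coefficients, starting from the quadratic ones.
  have key : ∀ i j : ℝ, |i| ≤ 1 → |j| ≤ 1 → (u + i * (r / 2), v + j * (r / 2)) ∈ U := by
    intro i j hi hj
    apply hball
    rw [abs_le] at hi hj
    rw [Metric.mem_ball, Prod.dist_eq, max_lt_iff, Real.dist_eq, Real.dist_eq, abs_lt, abs_lt]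
    refine ⟨⟨?_, ?_⟩, ⟨?_, ?_⟩⟩ <;> dsimp only <;> nlinarith
  obtain ⟨s, hs, rfl⟩ : ∃ s : ℝ, 0 < s ∧ r = 2 * s := ⟨r / 2, by positivity, by ring⟩
  have hs0 : s ≠ 0 := hs.ne'
  have e00 := h _ (key 0 0 (by norm_num) (by norm_num))
  have e10 := h _ (key 1 0 (by norm_num) (by norm_num))
  have em0 := h _ (key (-1) 0 (by norm_num) (by norm_num))
  have e01 := h _ (key 0 1 (by norm_num) (by norm_num))
  have e0m := h _ (key 0 (-1) (by norm_num) (by norm_num))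
  have e11 := h _ (key 1 1 (by norm_num) (by norm_num))
  dsimp only at e00 e10 em0 e01 e0m e11
  have hd : d = 0 := by
    have : s ^ 2 * d = 0 := by linear_combination (e10 + em0 - 2 * e00) / 2
    simpa [hs0] using this
  have hg : g = 0 := by
    have : s ^ 2 * g = 0 := by linear_combination (e01 + e0m - 2 * e00) / 2
    simpa [hs0] using this
  have he : e = 0 := by
    have : s ^ 2 * e = 0 := by linear_combination e11 - e10 - e01 + e00
    simpa [hs0] using this
  subst hd hg he
  have hb : b = 0 := by
    have : s * b = 0 := by linear_combination e10 - e00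
    simpa [hs0] using this
  have hc : c = 0 := by
    have : s * c = 0 := by linear_combination e01 - e00
    simpa [hs0] using this
  subst hb hc
  exact ⟨by linear_combination e00, rfl, rfl, rfl, rfl, rfl⟩

/-- The integrability condition of the first-order system satisfied by `f`: the polynomial
`M (L + c₂ξ₂) + c₁c₂ξ₂²` vanishes wherever the nonvanishing solution `f` is defined. -/
lemma compatibility {c0 c1 c2 cb0 cb1 cb2 : ℝ} {U : Set (ℝ × ℝ)} (hU : IsOpen U)
    {f : ℝ × ℝ → ℝ} (hf : ContDiffOn ℝ (⊤ : ℕ∞) f U) (hf0 : ∀ p ∈ U, f p ≠ 0)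
    (h0 : ∀ p ∈ U, p.2 * fderiv ℝ f p (1, 0)
      + ((cb0 + cb1 * p.1 + cb2 * p.2) * fderiv ℝ f p (0, 1) + cb2 * f p) = 0)
    (h1 : ∀ p ∈ U, (c0 + c1 * p.1 + c2 * p.2) * fderiv ℝ f p (0, 1) + c2 * f p = 0)
    {p : ℝ × ℝ} (hp : p ∈ U) :
    ((c2 * cb0 - c0 * cb2) + (c2 * cb1 - c1 * cb2) * p.1) * (c0 + c1 * p.1 + 2 * c2 * p.2)
      + c1 * c2 * p.2 ^ 2 = 0 := by
  have hUp : U ∈ nhds p := hU.mem_nhds hp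
  have hfp : ContDiffAt ℝ (⊤ : ℕ∞) f p := hf.contDiffAt hUp
  have hd : HasFDerivAt f (fderiv ℝ f p) p :=
    (hfp.differentiableAt (by simp)).hasFDerivAt
  have hdd : HasFDerivAt (fderiv ℝ f) (fderiv ℝ (fderiv ℝ f) p) p :=
    ((hfp.fderiv_right (m := 1) (by norm_cast)).differentiableAt (by simp)).hasFDerivAt
  have hsymm : fderiv ℝ (fderiv ℝ f) p (1, 0) (0, 1) = fderiv ℝ (fderiv ℝ f) p (0, 1) (1, 0) :=
    (hfp.isSymmSndFDerivAt (by simp; norm_cast)) _ _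
  have hv : ∀ v : ℝ × ℝ, HasFDerivAt (fun q => fderiv ℝ f q v)
      ((fderiv ℝ (fderiv ℝ f) p).flip v) p := fun v => by
    simpa using hdd.clm_apply (hasFDerivAt_const v p)
  have hL := hasFDerivAt_affine c0 c1 c2 p
  have hM := hasFDerivAt_affine (c2 * cb0 - c0 * cb2) (c2 * cb1 - c1 * cb2) 0 p
  have hx := hasFDerivAt_affine 0 0 1 p
  -- The equation `L ∂₂f + c₂ f = 0`, differentiated along `ξ₁`.
  have E1 := ((hL.fun_mul (hv (0, 1))).fun_add (hd.const_mul c2)).unique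
    ((hasFDerivAt_const (0 : ℝ) p).congr_of_eventuallyEq
      (Filter.eventually_of_mem hUp fun q hq => h1 q hq))
  -- The equation `ξ₂ L ∂₁f - M f = 0`, differentiated along `ξ₂`.
  have E2 := (((hx.fun_mul hL).fun_mul (hv (1, 0))).fun_sub (hM.fun_mul hd)).unique
    ((hasFDerivAt_const (0 : ℝ) p).congr_of_eventuallyEq
      (Filter.eventually_of_mem hUp fun q hq => by
        dsimp only
        linear_combination (c0 + c1 * q.1 + c2 * q.2) * h0 q hq
          - (cb0 + cb1 * q.1 + cb2 * q.2) * h1 q hq))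
  have E1' := congrArg (fun T : ℝ × ℝ →L[ℝ] ℝ => T (1, 0)) E1
  have E2' := congrArg (fun T : ℝ × ℝ →L[ℝ] ℝ => T (0, 1)) E2
  simp at E1' E2'
  have H0 := h0 p hp
  have H1 := h1 p hp
  rw [hsymm] at E1'
  generalize fderiv ℝ (fderiv ℝ f) p (0, 1) (1, 0) = s at *
  generalize fderiv ℝ f p (1, 0) = a at *
  generalize fderiv ℝ f p (0, 1) = b at *
  -- `ξ₂ L ∂₁f = M f`
  have H2 : p.2 * (c0 + c1 * p.1 + c2 * p.2) * a
      = ((c2 * cb0 - c0 * cb2) + (c2 * cb1 - c1 * cb2) * p.1) * f p := by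
    linear_combination (c0 + c1 * p.1 + c2 * p.2) * H0 - (cb0 + cb1 * p.1 + cb2 * p.2) * H1
  have H3 : (c0 + c1 * p.1 + c2 * p.2) * a
      = ((c2 * cb0 - c0 * cb2) + (c2 * cb1 - c1 * cb2) * p.1 + c1 * p.2) * b := by
    linear_combination E2' - p.2 * E1'
  apply mul_left_cancel₀ (hf0 p hp)
  linear_combination p.2 * (c0 + c1 * p.1 + c2 * p.2) * H3
    - (c0 + c1 * p.1 + c2 * p.2) * H2
    + ((c2 * cb0 - c0 * cb2) + (c2 * cb1 - c1 * cb2) * p.1 + c1 * p.2) * p.2 * H1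


/-- A strictly non-autonomous second-order affine Riccati chain equation
(`(c₀,c₁,c₂) ≠ (0,0,0)`, parameter `c = 0`), with
`Γ₀ = ξ₂∂₁ + (c̄₀ + c̄₁ξ₁ + c̄₂ξ₂)∂₂` and `Γ₁ = (c₀ + c₁ξ₁ + c₂ξ₂)∂₂`, admits a
Vessiot–Guldberg Lie algebra of Hamiltonian vector fields relative to a symplectic form
`f·dξ₁∧dξ₂` on some nonempty open set (i.e. `div(f·Γ₀) = div(f·Γ₁) = 0` for some smooth
nowhere-vanishing `f`) if and only if either (a) `c₂ = c̄₂ = 0`, or (b) `c₁ = c̄₁ = 0` and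
`c₂c̄₀ - c₀c̄₂ = 0`. -/
theorem affine_second_order_riccati_chain_hamiltonian_iff
    (c0 c1 c2 : ℝ) (hΓ1 : (c0, c1, c2) ≠ (0, 0, 0)) (cb0 cb1 cb2 : ℝ) :
    (∃ U : Set (ℝ × ℝ), IsOpen U ∧ U.Nonempty ∧
      ∃ f : ℝ × ℝ → ℝ, ContDiffOn ℝ (⊤ : ℕ∞) f U ∧ (∀ p ∈ U, f p ≠ 0) ∧
        (∀ p ∈ U,
          fderiv ℝ (fun q : ℝ × ℝ => f q * q.2) p ((1 : ℝ), (0 : ℝ))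
            + fderiv ℝ (fun q : ℝ × ℝ =>
                f q * (cb0 + cb1 * q.1 + cb2 * q.2)) p ((0 : ℝ), (1 : ℝ)) = 0) ∧
        (∀ p ∈ U,
          fderiv ℝ (fun q : ℝ × ℝ => f q * (0 : ℝ)) p ((1 : ℝ), (0 : ℝ))
            + fderiv ℝ (fun q : ℝ × ℝ =>
                f q * (c0 + c1 * q.1 + c2 * q.2)) p ((0 : ℝ), (1 : ℝ)) = 0))
    ↔ ((c2 = 0 ∧ cb2 = 0) ∨ (c1 = 0 ∧ cb1 = 0 ∧ c2 * cb0 - c0 * cb2 = 0)) := by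
  constructor
  · rintro ⟨U, hU, hne, f, hf, hf0, h0, h1⟩
    have hdiff : ∀ p ∈ U, DifferentiableAt ℝ f p := fun p hp =>
      (hf.contDiffAt (hU.mem_nhds hp)).differentiableAt (by simp)
    have h0' : ∀ p ∈ U, p.2 * fderiv ℝ f p (1, 0)
        + ((cb0 + cb1 * p.1 + cb2 * p.2) * fderiv ℝ f p (0, 1) + cb2 * f p) = 0 := by
      intro p hp
      rw [← fderiv_mul_snd_fst (hdiff p hp), ← fderiv_mul_affine_snd (hdiff p hp)]
      exact h0 p hp
    have h1' : ∀ p ∈ U,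
        (c0 + c1 * p.1 + c2 * p.2) * fderiv ℝ f p (0, 1) + c2 * f p = 0 := by
      intro p hp
      rw [← fderiv_mul_affine_snd (hdiff p hp)]
      simpa using h1 p hp
    obtain ⟨k1, k2, k3, k4, k5, k6⟩ := quadratic_coeffs_eq_zero hU hne
      ((c2 * cb0 - c0 * cb2) * c0)
      ((c2 * cb0 - c0 * cb2) * c1 + (c2 * cb1 - c1 * cb2) * c0)
      (2 * c2 * (c2 * cb0 - c0 * cb2))
      ((c2 * cb1 - c1 * cb2) * c1)
      (2 * c2 * (c2 * cb1 - c1 * cb2))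
      (c1 * c2)
      (fun p hp => by linear_combination compatibility hU hf hf0 h0' h1' hp)
    by_cases hc2 : c2 = 0
    · left
      refine ⟨hc2, ?_⟩
      subst hc2
      by_contra hcb
      apply hΓ1
      have hc0 : c0 = 0 := by simpa [hcb] using k1
      have hc1 : c1 = 0 := by simpa [hcb] using k4
      simp [hc0, hc1]
    · right
      have hc1 : c1 = 0 := by simpa [hc2] using k6
      subst hc1
      refine ⟨rfl, by simpa [hc2] using k5, by simpa [hc2] using k3⟩
  · rintro (⟨rfl, rfl⟩ | ⟨rfl, rfl, hk⟩)
    · refine ⟨Set.univ, isOpen_univ, Set.univ_nonempty, fun _ => 1, contDiffOn_const,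
        fun _ _ => one_ne_zero, fun p _ => ?_, fun p _ => ?_⟩
      · rw [fderiv_mul_snd_fst (differentiableAt_const _),
          fderiv_mul_affine_snd (differentiableAt_const _)]
        simp
      · rw [fderiv_mul_affine_snd (differentiableAt_const _)]
        simp
    · have hcont : Continuous fun q : ℝ × ℝ => c0 + c2 * q.2 := by fun_prop
      refine ⟨{q | c0 + c2 * q.2 ≠ 0}, isOpen_ne_fun hcont continuous_const, ?_,
        fun q => (c0 + c2 * q.2)⁻¹, ?_, fun p hp => inv_ne_zero hp, ?_⟩
      · by_cases hc0 : c0 = 0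
        · refine ⟨(0, 1), ?_⟩
          simpa [hc0] using hΓ1
        · exact ⟨(0, 0), by simpa using hc0⟩
      · refine ContDiffOn.inv (by fun_prop) fun p hp => hp
      · have hD : ∀ p : ℝ × ℝ, c0 + c2 * p.2 ≠ 0 →
            HasFDerivAt (fun q : ℝ × ℝ => (c0 + c2 * q.2)⁻¹)
              (-((c0 + c2 * p.2) ^ 2)⁻¹ • (c2 • ContinuousLinearMap.snd ℝ ℝ ℝ)) p := by
          intro p hp
          have h := hasFDerivAt_affine c0 0 c2 p
          simp only [zero_mul, add_zero, zero_smul, zero_add] at h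
          exact (hasDerivAt_inv hp).comp_hasFDerivAt p h
        refine ⟨fun p hp => ?_, fun p hp => ?_⟩
        · have hp' : c0 + c2 * p.2 ≠ 0 := hp
          have h := hD p hp'
          rw [fderiv_mul_snd_fst h.differentiableAt, fderiv_mul_affine_snd h.differentiableAt,
            h.fderiv]
          simp
          field_simp
          linear_combination (-((c0 + c2 * p.2) ^ 2)⁻¹) * hk
        · have hp' : c0 + c2 * p.2 ≠ 0 := hp
          have h := hD p hp'
          rw [fderiv_mul_affine_snd h.differentiableAt, h.fderiv]
          simp
          field_simp
          ring
end

section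
/- Let I ⊆ ℝ be an open interval, c ∈ ℝ, a : I → ℝ continuous, and let (y₁, y₂) : I → ℝ² be a differentiable curve satisfying the conformal (hyperbolic-signature) Riccati system y₁′ = c + y₁·y₂ and y₂′ = a(x) + (y₁² + y₂²)/2 on I. If y₁ is nowhere zero on I, then the function y := 1/y₁ is twice differentiable and solves on I the Gambier equation G27: y″ = (y′)²/(2y) − 2c·y·y′ − c²·y³/2 − a(x)·y − 1/(2y). -/
/-! Put `y = 1/y₁`. The first Riccati equation gives `y' = -(c + y₁y₂)/y₁²` on `I`. Since `I` is
open, this formula holds near each point of `I`, so it may be differentiated once more using both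
Riccati equations; G27 is then an identity of rational functions in `y₁`, `y₂`, `c` and `a x`. -/

/-- If `(y₁, y₂)` solves the conformal (hyperbolic-signature) Riccati system
`y₁' = c + y₁y₂`, `y₂' = a(x) + (y₁² + y₂²)/2` on an open interval `I` with `y₁` nowhere
zero, then `y := 1/y₁` is twice differentiable on `I` and solves the Gambier equation
G27: `y'' = (y')²/(2y) - 2cy·y' - c²y³/2 - a(x)y - 1/(2y)`. -/
theorem conformal_riccati_to_G27
    (I : Set ℝ) (hI : IsOpen I) (hI' : I.OrdConnected)
    (c : ℝ) (a : ℝ → ℝ) (ha : ContinuousOn a I)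
    (y₁ y₂ : ℝ → ℝ)
    (h1 : ∀ x ∈ I, HasDerivAt y₁ (c + y₁ x * y₂ x) x)
    (h2 : ∀ x ∈ I, HasDerivAt y₂ (a x + (y₁ x ^ 2 + y₂ x ^ 2) / 2) x)
    (hne : ∀ x ∈ I, y₁ x ≠ 0) :
    (∀ x ∈ I, DifferentiableAt ℝ (fun t => 1 / y₁ t) x) ∧
    (∀ x ∈ I, DifferentiableAt ℝ (deriv (fun t => 1 / y₁ t)) x) ∧
    (∀ x ∈ I,
      deriv (deriv (fun t => 1 / y₁ t)) x
        = (deriv (fun t => 1 / y₁ t) x) ^ 2 / (2 * (1 / y₁ x))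
          - 2 * c * (1 / y₁ x) * deriv (fun t => 1 / y₁ t) x
          - c ^ 2 * (1 / y₁ x) ^ 3 / 2
          - a x * (1 / y₁ x)
          - 1 / (2 * (1 / y₁ x))) := by
  have hy : ∀ x ∈ I, HasDerivAt (fun t => 1 / y₁ t) (-(c + y₁ x * y₂ x) / y₁ x ^ 2) x := by
    intro x hx
    simpa only [one_div] using (h1 x hx).fun_inv (hne x hx)
  have hy' : ∀ x ∈ I, HasDerivAt (deriv (fun t => 1 / y₁ t))
      ((-((c + y₁ x * y₂ x) * y₂ x + y₁ x * (a x + (y₁ x ^ 2 + y₂ x ^ 2) / 2)) * y₁ x ^ 2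
        + (c + y₁ x * y₂ x) * (2 * y₁ x * (c + y₁ x * y₂ x))) / (y₁ x ^ 2) ^ 2) x := by
    intro x hx
    have hnum : HasDerivAt (fun t => -(c + y₁ t * y₂ t))
        (-((c + y₁ x * y₂ x) * y₂ x + y₁ x * (a x + (y₁ x ^ 2 + y₂ x ^ 2) / 2))) x :=
      (((h1 x hx).fun_mul (h2 x hx)).const_add c).fun_neg
    have hden : HasDerivAt (fun t => y₁ t ^ 2) (2 * y₁ x * (c + y₁ x * y₂ x)) x := by
      simpa using (h1 x hx).fun_pow 2
    have hquot := hnum.fun_div hden (pow_ne_zero 2 (hne x hx))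
    have heq : deriv (fun t => 1 / y₁ t) =ᶠ[nhds x] fun t => -(c + y₁ t * y₂ t) / y₁ t ^ 2 := by
      filter_upwards [hI.mem_nhds hx] with t ht using (hy t ht).deriv
    refine (hquot.congr_of_eventuallyEq heq).congr_deriv ?_
    ring
  refine ⟨fun x hx => (hy x hx).differentiableAt, fun x hx => (hy' x hx).differentiableAt, ?_⟩
  intro x hx
  rw [(hy' x hx).deriv, (hy x hx).deriv]
  have h0 := hne x hx
  field_simp
  ring
end
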